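/- arXiv:1410.1294 — 7 statements merged into one kernel-verified Lean document; each statement's English description precedes it below -/
import Mathlib

section
/- Let X be a complex Hilbert space, let T ∈ B(X) be power-bounded, and let a ∈ ℓ¹(ℕ). Suppose that for every λ ∈ σ(T) ∩ 𝕋 one has (1/N)·‖∑_{n=0}^{N-1} conj(λ)ⁿ Tⁿ â(T)‖ → 0 as N → ∞ (operator norm). Then for every x ∈ X, ‖Tⁿ â(T) x‖ → 0 as n → ∞. (ℤ₊-instance of Proposition 3.6 of the paper.) -/
open Filter Topology

open Polynomial in
theorem aux_spec {X : Type*} [NormedAddCommGroup X] [InnerProductSpace ℂ X] [CompleteSpace X]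
    (T : X →L[ℂ] X) (p : ℂ[X]) (l : ℂ) (hl : l ∈ spectrum ℂ T) :
    ‖p.eval l‖ ≤ ‖aeval T p‖ := by
  have h1 : p.eval l ∈ spectrum ℂ (aeval T p) :=
    spectrum.subset_polynomial_aeval T p ⟨l, hl, rfl⟩
  have h2 := spectrum.norm_le_norm_mul_of_mem h1
  have h3 : ‖(1 : X →L[ℂ] X)‖ ≤ 1 := ContinuousLinearMap.norm_id_le
  nlinarith [norm_nonneg (aeval T p)]

/-- finite Parseval identity -/
theorem aux_parseval {X : Type*} [NormedAddCommGroup X] [InnerProductSpace ℂ X]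
    (K : ℕ) (ζ : ℂ) (hζ : IsPrimitiveRoot ζ K) (hK : 0 < K) (y : ℕ → X) :
    ∑ j ∈ Finset.range K, ‖∑ n ∈ Finset.range K, (ζ ^ j) ^ n • y n‖ ^ 2
      = K * ∑ n ∈ Finset.range K, ‖y n‖ ^ 2 := by
  have hn1 : ‖ζ‖ = 1 := hζ.norm'_eq_one hK.ne'
  have key : ∀ n ∈ Finset.range K, ∀ m ∈ Finset.range K,
      ∑ j ∈ Finset.range K, (starRingEnd ℂ ((ζ ^ j) ^ n)) * (ζ ^ j) ^ m
        = if n = m then (K : ℂ) else 0 := by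
    intro n hn m hm
    have hc : ∀ k : ℕ, starRingEnd ℂ (ζ ^ k) * ζ ^ k = 1 := by
      intro k
      rw [Complex.conj_mul']
      simp [hn1]
    have e : ∀ j, (starRingEnd ℂ ((ζ ^ j) ^ n)) * (ζ ^ j) ^ m
        = (starRingEnd ℂ (ζ ^ n) * ζ ^ m) ^ j := by
      intro j
      simp only [map_pow, mul_pow, ← pow_mul, mul_comm]
    simp only [e]
    split_ifs with hnm
    · subst hnm
      simp only [hc, one_pow]
      simp
    · have hw : starRingEnd ℂ (ζ ^ n) * ζ ^ m ≠ 1 := by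
        intro hw
        apply hnm
        apply hζ.pow_inj (Finset.mem_range.1 hn) (Finset.mem_range.1 hm)
        have h0 : starRingEnd ℂ (ζ ^ n) ≠ 0 := by
          intro h0
          have := hc n
          rw [h0] at this
          simp at this
        apply mul_left_cancel₀ h0
        rw [hw, hc]
      rw [geom_sum_eq hw]
      have : (starRingEnd ℂ (ζ ^ n) * ζ ^ m) ^ K = 1 := by
        rw [mul_pow, ← map_pow, ← pow_mul, ← pow_mul, mul_comm n, mul_comm m, pow_mul, pow_mul,
          hζ.pow_eq_one]
        simp
      rw [this]
      simp
  have : ((∑ j ∈ Finset.range K, ‖∑ n ∈ Finset.range K, (ζ ^ j) ^ n • y n‖ ^ 2 : ℝ) : ℂ)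
      = ((K * ∑ n ∈ Finset.range K, ‖y n‖ ^ 2 : ℝ) : ℂ) := by
    push_cast
    have e : ∀ z : X, ((‖z‖ : ℂ)) ^ 2 = inner ℂ z z := fun z =>
      (inner_self_eq_norm_sq_to_K (𝕜 := ℂ) z).symm
    simp only [e, sum_inner, inner_sum, inner_smul_left, inner_smul_right]
    rw [Finset.sum_comm, Finset.mul_sum]
    refine Finset.sum_congr rfl fun n hn => ?_
    simp only [Finset.mul_sum]
    rw [Finset.sum_comm]
    have : ∀ m ∈ Finset.range K, ∑ j ∈ Finset.range K,
        (ζ ^ j) ^ n * (starRingEnd ℂ ((ζ ^ j) ^ m) * inner ℂ (y m) (y n))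
        = (if m = n then (K : ℂ) else 0) * inner ℂ (y m) (y n) := by
      intro m hm
      rw [← key m hm n hn, Finset.sum_mul]
      refine Finset.sum_congr rfl fun j _ => ?_
      ring
    rw [Finset.sum_congr rfl this]
    simp only [ite_mul, zero_mul]
    rw [Finset.sum_ite_eq' (Finset.range K) n]
    simp [hn]
  exact_mod_cast this

/-- `F K μ = ∑_{n<K} μ^n T^n`. -/
noncomputable def auxF {X : Type*} [NormedAddCommGroup X] [InnerProductSpace ℂ X]
    (T : X →L[ℂ] X) (K : ℕ) (μ : ℂ) : X →L[ℂ] X :=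
  ∑ n ∈ Finset.range K, μ ^ n • T ^ n

theorem auxF_mul {X : Type*} [NormedAddCommGroup X] [InnerProductSpace ℂ X]
    (T : X →L[ℂ] X) (K : ℕ) (μ w : ℂ) (hμ : μ * w = 1) (hK : μ ^ K = 1) :
    auxF T K μ * (algebraMap ℂ _ w - T) = w • (1 - T ^ K) := by
  have h := geom_sum_mul (μ • T) K
  have e : (algebraMap ℂ (X →L[ℂ] X) w - T) = - (w • (μ • T - 1)) := by
    rw [smul_sub, smul_smul, mul_comm w, hμ, one_smul, Algebra.algebraMap_eq_smul_one]
    abel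
  have e2 : auxF T K μ = ∑ i ∈ Finset.range K, (μ • T) ^ i := by
    simp [auxF, smul_pow]
  rw [e, e2, mul_neg, mul_smul_comm, h, smul_pow, hK, one_smul, ← smul_neg, neg_sub]

open Polynomial in
theorem aux_poly {X : Type*} [NormedAddCommGroup X] [InnerProductSpace ℂ X]
    (T : X →L[ℂ] X) (M : ℝ) (hM : ∀ n : ℕ, ‖T ^ n‖ ≤ M) (p : ℂ[X]) :
    ∃ C : ℝ, ∀ (K : ℕ) (μ w : ℂ), μ * w = 1 → μ ^ K = 1 → ‖w‖ = 1 →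
      ‖auxF T K μ * (aeval T p - algebraMap ℂ _ (p.eval w))‖ ≤ C := by
  have hM0 : 0 ≤ M := (norm_nonneg _).trans (hM 0)
  induction p using Polynomial.induction_on' with
  | add p q hp hq =>
    obtain ⟨C, hC⟩ := hp
    obtain ⟨D, hD⟩ := hq
    refine ⟨C + D, fun K μ w h1 h2 h3 => ?_⟩
    have e : auxF T K μ * (aeval T (p + q) - algebraMap ℂ _ ((p + q).eval w))
      = auxF T K μ * (aeval T p - algebraMap ℂ _ (p.eval w))
        + auxF T K μ * (aeval T q - algebraMap ℂ _ (q.eval w)) := by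
      rw [← mul_add]
      simp only [map_add, eval_add]
      congr 1
      abel
    rw [e]
    exact (norm_add_le _ _).trans (add_le_add (hC K μ w h1 h2 h3) (hD K μ w h1 h2 h3))
  | monomial m c =>
    refine ⟨‖c‖ * ((M + M) * (m * M)), fun K μ w h1 h2 h3 => ?_⟩
    set A : X →L[ℂ] X := algebraMap ℂ _ w with hA
    have hcomm : Commute A T := Algebra.commutes w T
    have hg := hcomm.mul_geom_sum₂ m
    have e : auxF T K μ * (aeval T (monomial m c) - algebraMap ℂ _ ((monomial m c).eval w))
      = (-c) • ((w • (1 - T ^ K)) * ∑ i ∈ Finset.range m, A ^ i * T ^ (m - 1 - i)) := by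
      rw [← auxF_mul T K μ w h1 h2, mul_assoc, hg, aeval_monomial, eval_monomial, map_mul, map_pow,
        ← hA, ← mul_sub, ← Algebra.smul_def, mul_smul_comm, neg_smul, ← smul_neg, ← mul_neg, neg_sub]
    rw [e, norm_smul, norm_neg]
    refine mul_le_mul_of_nonneg_left ?_ (norm_nonneg _)
    refine (norm_mul_le _ _).trans (mul_le_mul ?_ ?_ (norm_nonneg _) (by linarith))
    · rw [norm_smul, h3, one_mul]
      refine (norm_sub_le _ _).trans (add_le_add ?_ (hM K))
      simpa using hM 0
    · refine (norm_sum_le_of_le (Finset.range m) (f := fun i => A ^ i * T ^ (m - 1 - i))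
        (n := fun _ => M) ?_).trans (by simp)
      intro i _
      rw [hA, ← map_pow, ← Algebra.smul_def, norm_smul, norm_pow, h3, one_pow, one_mul]
      exact hM _

open Polynomial in
/-- Polynomial approximation of `â(T)`, small on the unitary spectrum. -/
theorem aux_approx {X : Type*} [NormedAddCommGroup X] [InnerProductSpace ℂ X] [CompleteSpace X]
    (T : X →L[ℂ] X) (M : ℝ) (hM : ∀ n : ℕ, ‖T ^ n‖ ≤ M)
    (a : ℕ → ℂ) (ha : Summable fun n : ℕ => ‖a n‖)
    (h : ∀ lam ∈ spectrum ℂ T, ‖lam‖ = 1 →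
      Tendsto (fun N : ℕ =>
          (1 / (N : ℝ)) * ‖∑ n ∈ Finset.range N, (starRingEnd ℂ lam) ^ n •
            (T ^ n * (∑' m : ℕ, a m • T ^ m))‖)
        atTop (nhds 0)) (ε : ℝ) (hε : 0 < ε) :
    ∃ p : ℂ[X], ‖(∑' m : ℕ, a m • T ^ m) - aeval T p‖ ≤ ε ∧
      ∀ lam ∈ spectrum ℂ T, ‖lam‖ = 1 → ‖p.eval lam‖ ≤ M * ε := by
  have hM0 : 0 ≤ M := (norm_nonneg _).trans (hM 0)
  have hs : Summable fun m : ℕ => a m • T ^ m := by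
    refine Summable.of_norm_bounded (ha.mul_right M) fun m => ?_
    rw [norm_smul]
    exact mul_le_mul_of_nonneg_left (hM m) (norm_nonneg _)
  set S : X →L[ℂ] X := ∑' m : ℕ, a m • T ^ m with hS
  obtain ⟨N, hN⟩ := ((Metric.tendsto_atTop.1 hs.hasSum.tendsto_sum_nat) ε hε)
  have hN' := hN N le_rfl
  rw [dist_comm, dist_eq_norm] at hN'
  refine ⟨∑ m ∈ Finset.range N, monomial m (a m), ?_, ?_⟩
  · simpa [aeval_monomial, ← Algebra.smul_def] using hN'.le
  intro l hl hl1
  set p : ℂ[X] := ∑ m ∈ Finset.range N, monomial m (a m) with hp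
  have hpT : ‖aeval T p - S‖ ≤ ε := by
    rw [norm_sub_rev]
    simpa [hp, aeval_monomial, ← Algebra.smul_def] using hN'.le
  have key : ∀ K : ℕ, 0 < K → ‖p.eval l‖ ≤ (1 / (K : ℝ)) *
      ‖∑ n ∈ Finset.range K, (starRingEnd ℂ l) ^ n • (T ^ n * S)‖ + M * ε := by
    intro K hK
    have hKr : (0 : ℝ) < K := by exact_mod_cast hK
    have h1 := aux_spec T ((∑ n ∈ Finset.range K, monomial n ((starRingEnd ℂ l) ^ n)) * p) l hl
    have hll : starRingEnd ℂ l * l = 1 := by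
      rw [Complex.conj_mul']; simp [hl1]
    have e1 : ((∑ n ∈ Finset.range K, monomial n ((starRingEnd ℂ l) ^ n)) * p).eval l
        = K * p.eval l := by
      rw [eval_mul, eval_finsetSum]
      simp [eval_monomial, ← mul_pow, hll]
    have e2 : aeval T ((∑ n ∈ Finset.range K, monomial n ((starRingEnd ℂ l) ^ n)) * p)
        = (∑ n ∈ Finset.range K, (starRingEnd ℂ l) ^ n • (T ^ n * S))
          + ∑ n ∈ Finset.range K, (starRingEnd ℂ l) ^ n • (T ^ n * (aeval T p - S)) := by
      rw [← Finset.sum_add_distrib, map_mul, map_sum, Finset.sum_mul]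
      refine Finset.sum_congr rfl fun n _ => ?_
      rw [aeval_monomial, ← Algebra.smul_def, ← smul_add, ← mul_add, smul_mul_assoc]
      congr 2
      abel
    have h3 : ‖∑ n ∈ Finset.range K, (starRingEnd ℂ l) ^ n • (T ^ n * (aeval T p - S))‖
        ≤ K * (M * ε) := by
      refine (norm_sum_le_of_le (Finset.range K) (n := fun _ => M * ε) ?_).trans (by simp)
      intro n _
      rw [norm_smul, norm_pow, RCLike.norm_conj, hl1, one_pow, one_mul]
      exact (norm_mul_le _ _).trans (mul_le_mul (hM n) hpT (norm_nonneg _) hM0)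
    rw [e1, e2, norm_mul, Complex.norm_natCast] at h1
    have h4 := h1.trans ((norm_add_le _ _).trans (add_le_add le_rfl h3))
    have h5 : ‖p.eval l‖ ≤ (‖∑ n ∈ Finset.range K, (starRingEnd ℂ l) ^ n • (T ^ n * S)‖
        + K * (M * ε)) / K := by
      rw [le_div_iff₀ hKr]; linarith
    refine h5.trans (le_of_eq ?_)
    field_simp
  have hlim := (h l hl hl1).add_const (M * ε)
  rw [zero_add] at hlim
  refine ge_of_tendsto hlim ?_
  filter_upwards [eventually_gt_atTop 0] with K hK using key K hK

open Polynomial in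
/-- Away from the spectrum, `F` is bounded. -/
theorem aux_res {X : Type*} [NormedAddCommGroup X] [InnerProductSpace ℂ X] [CompleteSpace X]
    (T : X →L[ℂ] X) (M : ℝ) (hM : ∀ n : ℕ, ‖T ^ n‖ ≤ M) (p : ℂ[X]) (δ : ℝ)
    (hδ : ∀ lam ∈ spectrum ℂ T, ‖lam‖ = 1 → ‖p.eval lam‖ < δ) :
    ∃ C : ℝ, 0 ≤ C ∧ ∀ (K : ℕ) (μ w : ℂ), μ * w = 1 → μ ^ K = 1 → ‖w‖ = 1 → δ ≤ ‖p.eval w‖ →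
      ‖p.eval w‖ * ‖auxF T K μ‖ ≤ C := by
  have hM0 : 0 ≤ M := (norm_nonneg _).trans (hM 0)
  set G : Set ℂ := Metric.sphere 0 1 ∩ {w | δ ≤ ‖p.eval w‖} with hG
  have hGc : IsCompact G := (isCompact_sphere 0 1).inter_right
    (isClosed_le continuous_const p.continuous.norm)
  have hsub : G ⊆ resolventSet ℂ T := by
    intro w hw
    by_contra hn
    have := hδ w hn (by simpa using hw.1)
    exact absurd hw.2 (not_le.2 this)
  have hcont : ContinuousOn (fun w => ‖p.eval w‖ * ‖resolvent T w‖) G := by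
    intro w hw
    have h1 : ContinuousAt (resolvent T : ℂ → _) w :=
      (spectrum.hasDerivAt_resolvent_const_left (hsub hw)).continuousAt
    exact (p.continuous.norm.continuousAt.mul h1.norm).continuousWithinAt
  obtain ⟨C, hC⟩ := hGc.exists_bound_of_continuousOn hcont
  refine ⟨max C 0 * (M + M), by positivity, fun K μ w h1 h2 h3 h4 => ?_⟩
  have hwG : w ∈ G := ⟨by simpa using h3, h4⟩
  have hu : IsUnit (algebraMap ℂ (X →L[ℂ] X) w - T) := hsub hwG
  have e : auxF T K μ = (w • (1 - T ^ K)) * resolvent T w := by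
    rw [← auxF_mul T K μ w h1 h2, mul_assoc, resolvent, Ring.mul_inverse_cancel _ hu, mul_one]
  have hb : ‖w • (1 - T ^ K)‖ ≤ M + M := by
    rw [norm_smul, h3, one_mul]
    refine (norm_sub_le _ _).trans (add_le_add ?_ (hM K))
    simpa using hM 0
  have hCw := hC w hwG
  rw [Real.norm_of_nonneg (by positivity)] at hCw
  calc ‖p.eval w‖ * ‖auxF T K μ‖ ≤ ‖p.eval w‖ * ((M + M) * ‖resolvent T w‖) := by
        rw [e]
        exact mul_le_mul_of_nonneg_left ((norm_mul_le _ _).trans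
          (mul_le_mul_of_nonneg_right hb (norm_nonneg _))) (norm_nonneg _)
    _ = (‖p.eval w‖ * ‖resolvent T w‖) * (M + M) := by ring
    _ ≤ max C 0 * (M + M) :=
        mul_le_mul_of_nonneg_right (hCw.trans (le_max_left _ _)) (by linarith)

open Polynomial in
theorem aux_main {X : Type*} [NormedAddCommGroup X] [InnerProductSpace ℂ X] [CompleteSpace X]
    (T : X →L[ℂ] X) (M : ℝ) (hM : ∀ n : ℕ, ‖T ^ n‖ ≤ M)
    (S : X →L[ℂ] X) (x : X) (p : ℂ[X]) (ε δ : ℝ) (hp : ‖S - aeval T p‖ ≤ ε)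
    (hδ : ∀ lam ∈ spectrum ℂ T, ‖lam‖ = 1 → ‖p.eval lam‖ < δ) :
    ∃ D : ℝ, ∀ K : ℕ, 0 < K → K * ∑ n ∈ Finset.range K, ‖(T ^ n) (S x)‖ ^ 2
      ≤ 3 * K ^ 2 * (M ^ 2 * (ε ^ 2 + δ ^ 2) * ‖x‖ ^ 2) + K * D := by
  have hM0 : 0 ≤ M := (norm_nonneg _).trans (hM 0)
  obtain ⟨C₁, hC₁⟩ := aux_poly T M hM p
  obtain ⟨C₂, hC₂0, hC₂⟩ := aux_res T M hM p δ hδ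
  refine ⟨3 * ((C₁ * ‖x‖) ^ 2 + (C₂ * ‖x‖) ^ 2), fun K hK => ?_⟩
  set ζ : ℂ := Complex.exp (2 * Real.pi * Complex.I / K)
  have hζ : IsPrimitiveRoot ζ K := Complex.isPrimitiveRoot_exp K hK.ne'
  have hn1 : ‖ζ‖ = 1 := hζ.norm'_eq_one hK.ne'
  have hF : ∀ μ : ℂ, ∀ y : X, auxF T K μ y = ∑ n ∈ Finset.range K, μ ^ n • (T ^ n) y := by
    intro μ y
    simp [auxF]
  have hP : ∀ y : X, ∑ j ∈ Finset.range K, ‖auxF T K (ζ ^ j) y‖ ^ 2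
      = K * ∑ n ∈ Finset.range K, ‖(T ^ n) y‖ ^ 2 := by
    intro y
    simp only [hF]
    exact aux_parseval K ζ hζ hK fun n => (T ^ n) y
  have hB : ∀ y : X, ∑ j ∈ Finset.range K, ‖auxF T K (ζ ^ j) y‖ ^ 2 ≤ K ^ 2 * (M * ‖y‖) ^ 2 := by
    intro y
    rw [hP, pow_two (K : ℝ), mul_assoc]
    refine mul_le_mul_of_nonneg_left ?_ (Nat.cast_nonneg K)
    refine (Finset.sum_le_card_nsmul _ _ ((M * ‖y‖) ^ 2) fun n _ => ?_).trans (by simp)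
    have := ((T ^ n).le_opNorm y).trans (mul_le_mul_of_nonneg_right (hM n) (norm_nonneg y))
    gcongr
  have hpt : ∀ j ∈ Finset.range K, ‖auxF T K (ζ ^ j) (S x)‖ ^ 2 ≤
      3 * ‖auxF T K (ζ ^ j) ((S - aeval T p) x)‖ ^ 2 + 3 * (δ ^ 2 * ‖auxF T K (ζ ^ j) x‖ ^ 2)
       + 3 * ((C₁ * ‖x‖) ^ 2 + (C₂ * ‖x‖) ^ 2) := by
    intro j _
    set μ := ζ ^ j with hμ
    have hμ1 : ‖μ‖ = 1 := by simp [hμ, hn1]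
    have hμ0 : μ ≠ 0 := by
      intro h0; simp [h0] at hμ1
    have hw : μ * μ⁻¹ = 1 := mul_inv_cancel₀ hμ0
    have hw1 : ‖μ⁻¹‖ = 1 := by simp [hμ1]
    have hμK : μ ^ K = 1 := by
      rw [hμ, ← pow_mul, mul_comm, pow_mul, hζ.pow_eq_one, one_pow]
    set w := μ⁻¹
    set A := auxF T K μ with hA
    have c1 : ‖A ((aeval T p - algebraMap ℂ _ (p.eval w)) x)‖ ≤ C₁ * ‖x‖ := by
      have := (A * (aeval T p - algebraMap ℂ _ (p.eval w))).le_opNorm x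
      exact this.trans (mul_le_mul_of_nonneg_right (hC₁ K μ w hw hμK hw1) (norm_nonneg x))
    have c2 : (‖p.eval w‖ * ‖A x‖) ^ 2 ≤ δ ^ 2 * ‖A x‖ ^ 2 + (C₂ * ‖x‖) ^ 2 := by
      by_cases hd : δ ≤ ‖p.eval w‖
      · have h1 := hC₂ K μ w hw hμK hw1 hd
        have h2 : ‖p.eval w‖ * ‖A x‖ ≤ C₂ * ‖x‖ := by
          calc ‖p.eval w‖ * ‖A x‖ ≤ ‖p.eval w‖ * (‖A‖ * ‖x‖) :=
                mul_le_mul_of_nonneg_left (A.le_opNorm x) (norm_nonneg _)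
            _ = (‖p.eval w‖ * ‖A‖) * ‖x‖ := by ring
            _ ≤ C₂ * ‖x‖ := mul_le_mul_of_nonneg_right h1 (norm_nonneg x)
        have h3 : (‖p.eval w‖ * ‖A x‖) ^ 2 ≤ (C₂ * ‖x‖) ^ 2 := by gcongr
        have : 0 ≤ δ ^ 2 * ‖A x‖ ^ 2 := by positivity
        linarith
      · have h1 : ‖p.eval w‖ ^ 2 ≤ δ ^ 2 := by
          have := (not_le.1 hd).le
          gcongr
        have h2 := mul_le_mul_of_nonneg_right h1 (sq_nonneg ‖A x‖)
        have h3 : 0 ≤ (C₂ * ‖x‖) ^ 2 := by positivity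
        rw [mul_pow]
        linarith
    have e : A (S x) = A ((S - aeval T p) x)
        + A ((aeval T p - algebraMap ℂ _ (p.eval w)) x) + p.eval w • A x := by
      rw [← map_add, ← map_smul, ← map_add]
      congr 1
      simp [Algebra.algebraMap_eq_smul_one]
    have n1 : ‖A (S x)‖ ≤ ‖A ((S - aeval T p) x)‖
        + ‖A ((aeval T p - algebraMap ℂ _ (p.eval w)) x)‖ + ‖p.eval w‖ * ‖A x‖ := by
      rw [e, ← norm_smul]
      exact norm_add₃_le
    generalize ‖A ((S - aeval T p) x)‖ = u at *
    have c1' : ‖A ((aeval T p - algebraMap ℂ _ (p.eval w)) x)‖ ^ 2 ≤ (C₁ * ‖x‖) ^ 2 := by gcongr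
    generalize ‖A ((aeval T p - algebraMap ℂ _ (p.eval w)) x)‖ = v at *
    generalize ‖p.eval w‖ * ‖A x‖ = z at *
    have n2 : ‖A (S x)‖ ^ 2 ≤ (u + v + z) ^ 2 := by gcongr
    nlinarith [sq_nonneg (u - v), sq_nonneg (v - z), sq_nonneg (u - z)]
  rw [← hP]
  refine (Finset.sum_le_sum hpt).trans ?_
  rw [Finset.sum_add_distrib, Finset.sum_add_distrib, ← Finset.mul_sum, ← Finset.mul_sum,
    ← Finset.mul_sum]
  have b1 := hB ((S - aeval T p) x)
  have b2 := mul_le_mul_of_nonneg_left (hB x) (sq_nonneg δ)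
  have b3 : (K : ℝ) ^ 2 * (M * ‖(S - aeval T p) x‖) ^ 2 ≤ K ^ 2 * (M * (ε * ‖x‖)) ^ 2 := by
    have := ((S - aeval T p).le_opNorm x).trans (mul_le_mul_of_nonneg_right hp (norm_nonneg x))
    gcongr
  simp only [Finset.sum_const, Finset.card_range, nsmul_eq_mul]
  nlinarith

/-- ℤ₊-instance of Proposition 3.6: if `T` is power-bounded on a complex Hilbert space,
`a ∈ ℓ¹(ℕ)`, and for every `λ ∈ σ(T) ∩ 𝕋` the Cesàro averages
`(1/N)·‖∑_{n<N} conj(λ)ⁿ Tⁿ â(T)‖` tend to `0`, then `‖Tⁿ â(T) x‖ → 0` for every `x`. -/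
theorem stmt_4 {X : Type*} [NormedAddCommGroup X] [InnerProductSpace ℂ X] [CompleteSpace X]
    (T : X →L[ℂ] X) (hT : ∃ M : ℝ, ∀ n : ℕ, ‖T ^ n‖ ≤ M)
    (a : ℕ → ℂ) (ha : Summable fun n : ℕ => ‖a n‖)
    (h : ∀ lam ∈ spectrum ℂ T, ‖lam‖ = 1 →
      Tendsto (fun N : ℕ =>
          (1 / (N : ℝ)) * ‖∑ n ∈ Finset.range N, (starRingEnd ℂ lam) ^ n •
            (T ^ n * (∑' m : ℕ, a m • T ^ m))‖)
        atTop (nhds 0)) :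
    ∀ x : X, Tendsto (fun n : ℕ => ‖(T ^ n) ((∑' m : ℕ, a m • T ^ m) x)‖) atTop (nhds 0) := by
  intro x
  obtain ⟨M, hM⟩ := hT
  have hM0 : 0 ≤ M := (norm_nonneg _).trans (hM 0)
  have happ := aux_approx T M hM a ha h
  set S : X →L[ℂ] X := ∑' m : ℕ, a m • T ^ m with hS
  -- squared version
  suffices hsq : Tendsto (fun n : ℕ => ‖(T ^ n) (S x)‖ ^ 2) atTop (nhds 0) by
    have := hsq.sqrt
    simpa [Real.sqrt_sq] using this
  set B : ℝ := M ^ 2 * (3 * (M ^ 2 * (1 + (M + 1) ^ 2) * ‖x‖ ^ 2)) with hB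
  have hB0 : 0 ≤ B := by positivity
  rw [Metric.tendsto_atTop]
  intro η hη
  -- choose ε with B ε² < η / 2
  obtain ⟨ε, hε, hεB⟩ : ∃ ε : ℝ, 0 < ε ∧ B * ε ^ 2 < η / 2 := by
    have hc : Tendsto (fun e : ℝ => B * e ^ 2) (𝓝[>] 0) (𝓝 (B * 0 ^ 2)) :=
      ((continuous_const.mul (continuous_id.pow 2)).tendsto 0).mono_left nhdsWithin_le_nhds
    have h2 : ∀ᶠ e in 𝓝[>] (0 : ℝ), B * e ^ 2 < η / 2 :=
      hc.eventually_lt_const (by simpa using hη)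
    obtain ⟨e, he1, he2⟩ := (h2.and self_mem_nhdsWithin).exists
    exact ⟨e, he2, he1⟩
  obtain ⟨p, hp1, hp2⟩ := happ ε hε
  obtain ⟨D, hD⟩ := aux_main T M hM S x p ε ((M + 1) * ε) hp1 (fun l hl hl1 =>
    (hp2 l hl hl1).trans_lt (by nlinarith))
  have hlim : Tendsto (fun K : ℕ => M ^ 2 * D / (K : ℝ)) atTop (𝓝 0) :=
    tendsto_const_div_atTop_nhds_zero_nat _
  obtain ⟨N, hN⟩ := eventually_atTop.1 (hlim.eventually_lt_const (half_pos hη))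
  refine ⟨max N 1, fun K hK => ?_⟩
  have hK0 : 0 < K := lt_of_lt_of_le one_pos ((le_max_right _ _).trans hK)
  have hKr : (0 : ℝ) < K := by exact_mod_cast hK0
  have hNK := hN K ((le_max_left _ _).trans hK)
  have hDK := hD K hK0
  have hmono : K * ‖(T ^ K) (S x)‖ ^ 2 ≤ M ^ 2 * ∑ n ∈ Finset.range K, ‖(T ^ n) (S x)‖ ^ 2 := by
    rw [Finset.mul_sum]
    have : ∀ n ∈ Finset.range K, ‖(T ^ K) (S x)‖ ^ 2 ≤ M ^ 2 * ‖(T ^ n) (S x)‖ ^ 2 := by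
      intro n hn
      have e : T ^ K = T ^ (K - n) * T ^ n := by
        rw [← pow_add, Nat.sub_add_cancel (Finset.mem_range.1 hn).le]
      have h1 : ‖(T ^ K) (S x)‖ ≤ M * ‖(T ^ n) (S x)‖ := by
        rw [e]
        exact ((T ^ (K - n)).le_opNorm _).trans
          (mul_le_mul_of_nonneg_right (hM _) (norm_nonneg _))
      rw [← mul_pow]
      gcongr
    have h2 := Finset.card_nsmul_le_sum _ _ _ this
    simpa using h2
  rw [Real.dist_0_eq_abs, abs_of_nonneg (by positivity)]
  have hfin : ‖(T ^ K) (S x)‖ ^ 2 ≤ B * ε ^ 2 + M ^ 2 * D / K := by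
    have h1 : (K : ℝ) ^ 2 * ‖(T ^ K) (S x)‖ ^ 2 ≤ (K : ℝ) ^ 2 * (B * ε ^ 2 + M ^ 2 * D / K) := by
      calc (K : ℝ) ^ 2 * ‖(T ^ K) (S x)‖ ^ 2 = K * (K * ‖(T ^ K) (S x)‖ ^ 2) := by ring
        _ ≤ K * (M ^ 2 * ∑ n ∈ Finset.range K, ‖(T ^ n) (S x)‖ ^ 2) :=
          mul_le_mul_of_nonneg_left hmono hKr.le
        _ = M ^ 2 * (K * ∑ n ∈ Finset.range K, ‖(T ^ n) (S x)‖ ^ 2) := by ring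
        _ ≤ M ^ 2 * _ := mul_le_mul_of_nonneg_left hDK (sq_nonneg M)
        _ = (K : ℝ) ^ 2 * (B * ε ^ 2 + M ^ 2 * D / K) := by
          rw [hB]; field_simp
    exact le_of_mul_le_mul_left h1 (by positivity)
  linarith
end

section
/- Let X be a complex Hilbert space, let T ∈ B(X) be power-bounded, and let a ∈ ℓ¹(ℕ). Suppose that for every λ ∈ σ(T) ∩ 𝕋 one has (1/N)·‖∑_{n=0}^{N-1} conj(λ)ⁿ Tⁿ â(T)‖ → 0 as N → ∞ (operator norm). Then ‖Tⁿ â(T)‖ → 0 as n → ∞ in the operator norm. (ℤ₊-instance of Proposition 3.7 of the paper.) -/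
open Filter Topology

namespace KT

/-- An isometry missing a unimodular point in its spectrum is unitary. -/
theorem unitary_of_isometry {B : Type*} [CStarAlgebra B] (V : B)
    (hV : star V * V = 1) (lam : ℂ) (hl : ‖lam‖ = 1) (hs : lam ∉ spectrum ℂ V) :
    V ∈ unitary B := by
  rw [spectrum.notMem_iff] at hs
  have hc : star lam * lam = 1 := by
    have := Complex.conj_mul' lam
    rw [hl] at this
    simpa using this
  have h1 : IsUnit (1 - star lam • V) := by
    have h2 : (1 - star lam • V) = star lam • (algebraMap ℂ B lam - V) := by
      rw [smul_sub, Algebra.algebraMap_eq_smul_one, smul_smul, hc, one_smul]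
    rw [h2]
    have h3 : IsUnit (star lam) := IsUnit.of_mul_eq_one _ hc
    obtain ⟨u, hu⟩ := h3
    rw [← hu]
    have := hs.smul u
    exact this
  have h2 : IsUnit (algebraMap ℂ B (star lam) - star V) := by
    have := hs.star
    rwa [star_sub, ← algebraMap_star_comm] at this
  obtain ⟨W, hW⟩ := h1.exists_right_inv
  obtain ⟨Z, hZ⟩ := h2.exists_left_inv
  set P := 1 - V * star V with hP
  have hVP : star V * P = 0 := by
    rw [hP, mul_sub, ← mul_assoc, hV]; simp
  have hy : W * P = P + star lam • (V * (W * P)) := by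
    have : (1 - star lam • V) * (W * P) = P := by rw [← mul_assoc, hW, one_mul]
    rw [sub_mul, one_mul, smul_mul_assoc] at this
    exact sub_eq_iff_eq_add.mp this
  have hy2 : star V * (W * P) = star lam • (W * P) := by
    conv_lhs => rw [hy]
    rw [mul_add, hVP, mul_smul_comm, ← mul_assoc, hV, zero_add, one_mul]
  have hy3 : W * P = 0 := by
    have : (algebraMap ℂ B (star lam) - star V) * (W * P) = 0 := by
      rw [sub_mul, hy2, Algebra.algebraMap_eq_smul_one, smul_mul_assoc, one_mul, sub_self]
    rw [← one_mul (W * P), ← hZ, mul_assoc, this, mul_zero]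
  have hP0 : P = 0 := by
    rw [hy3] at hy; simpa using hy.symm
  rw [Unitary.mem_iff]
  exact ⟨hV, (sub_eq_zero.mp hP0).symm⟩

/-- functional calculus -/
theorem tendsto_of_unitary {B : Type*} [CStarAlgebra B] (V : B) (hV : V ∈ unitary B)
    (a : ℕ → ℂ) (ha : Summable fun n : ℕ => ‖a n‖)
    (h0 : ∀ z ∈ spectrum ℂ V, ‖z‖ = 1 → ∑' n, a n * z ^ n = 0) :
    Tendsto (fun N => ‖∑ n ∈ Finset.range N, a n • V ^ n‖) atTop (𝓝 0) := by
  have hn : IsStarNormal V := ⟨by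
    rw [Unitary.mem_iff] at hV
    rw [Commute, SemiconjBy, hV.1, hV.2]⟩
  have htail : Tendsto (fun N => ∑' n, ‖a (n + N)‖) atTop (𝓝 0) :=
    tendsto_sum_nat_add (fun n => ‖a n‖)
  refine squeeze_zero (fun _ => norm_nonneg _) (fun N => ?_) htail
  have e : ∑ n ∈ Finset.range N, a n • V ^ n
      = cfc (fun z : ℂ => ∑ n ∈ Finset.range N, a n * z ^ n) V := by
    rw [show (fun z : ℂ => ∑ n ∈ Finset.range N, a n * z ^ n) =
      (∑ n ∈ Finset.range N, Polynomial.monomial n (a n) : Polynomial ℂ).eval from ?_]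
    · rw [cfc_polynomial _ V]
      simp [Polynomial.aeval_monomial, Algebra.smul_def]
    · ext z
      simp [Polynomial.eval_finsetSum]
  rw [e]
  refine norm_cfc_le (tsum_nonneg fun _ => norm_nonneg _) fun z hz => ?_
  have hz1 : ‖z‖ = 1 := by
    simpa using spectrum.subset_circle_of_unitary hV hz
  have hs : Summable fun n => a n * z ^ n := by
    refine Summable.of_norm ?_
    simpa [hz1] using ha
  have h1 := hs.sum_add_tsum_nat_add N
  rw [h0 z hz hz1] at h1
  rw [eq_neg_of_add_eq_zero_left h1, norm_neg]
  refine (norm_tsum_le_tsum_norm ?_).trans (le_of_eq ?_)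
  · simpa [hz1] using (summable_nat_add_iff N).2 ha
  · simp [hz1]


theorem completion_mul {E : Type*} [SeminormedAddCommGroup E] [InnerProductSpace ℂ E]
    (f g : E →L[ℂ] E) : (f * g).completion = f.completion * g.completion := by
  ext c
  induction c using UniformSpace.Completion.induction_on with
  | hp => apply isClosed_eq <;> fun_prop
  | ih c => simp

theorem completion_one {E : Type*} [SeminormedAddCommGroup E] [InnerProductSpace ℂ E] :
    (1 : E →L[ℂ] E).completion = 1 := by
  ext c
  induction c using UniformSpace.Completion.induction_on with
  | hp => apply isClosed_eq <;> fun_prop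
  | ih c => simp

theorem completion_resolvent {E : Type*} [SeminormedAddCommGroup E] [InnerProductSpace ℂ E]
    (t : E →L[ℂ] E) (z : ℂ) : (algebraMap ℂ (E →L[ℂ] E) z - t).completion =
      algebraMap ℂ _ z - t.completion := by
  ext c
  induction c using UniformSpace.Completion.induction_on with
  | hp => apply isClosed_eq <;> fun_prop
  | ih c => simp [Algebra.algebraMap_eq_smul_one, UniformSpace.Completion.coe_sub]

theorem tendsto_pre {E : Type*} [SeminormedAddCommGroup E] [InnerProductSpace ℂ E]
    (t : E →L[ℂ] E) (ht : ∀ x, ‖t x‖ = ‖x‖) (lam : ℂ) (hl : ‖lam‖ = 1)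
    (hs : lam ∉ spectrum ℂ t)
    (a : ℕ → ℂ) (ha : Summable fun n : ℕ => ‖a n‖)
    (h0 : ∀ z ∈ spectrum ℂ t, ‖z‖ = 1 → ∑' n, a n * z ^ n = 0) (x : E) :
    Tendsto (fun N => ‖(∑ n ∈ Finset.range N, a n • t ^ n) x‖) atTop (𝓝 0) := by
  set V := t.completion with hVdef
  have hsub : ∀ z, z ∉ spectrum ℂ t → z ∉ spectrum ℂ V := by
    intro z hz
    rw [spectrum.notMem_iff] at hz ⊢
    obtain ⟨u, hu⟩ := hz
    rw [hVdef, ← completion_resolvent, ← hu]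
    exact ⟨⟨u.val.completion, (u⁻¹).val.completion, by rw [← completion_mul, u.mul_inv, completion_one],
      by rw [← completion_mul, u.inv_mul, completion_one]⟩, rfl⟩
  have hiso : star V * V = 1 := by
    rw [ContinuousLinearMap.star_eq_adjoint]
    refine (ContinuousLinearMap.norm_map_iff_adjoint_comp_self V).1 ?_
    intro c
    induction c using UniformSpace.Completion.induction_on with
    | hp => apply isClosed_eq <;> fun_prop
    | ih c => simp [hVdef, ht]
  have hU := unitary_of_isometry V hiso lam hl (hsub _ hs)
  have := tendsto_of_unitary V hU a ha (fun z hz => h0 z (by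
    by_contra hc
    exact hsub z hc hz))
  have h3 := this.mul_const ‖x‖
  rw [zero_mul] at h3
  refine squeeze_zero (fun _ => norm_nonneg _) (fun N => ?_) h3
  have hpow : ∀ n, ((t ^ n) x : UniformSpace.Completion E) = (V ^ n) x := by
    intro n
    induction n with
    | zero => simp
    | succ n ih =>
      rw [pow_succ', pow_succ', mul_apply_eq_comp, mul_apply_eq_comp, ← ih]
      simp [hVdef]
  have key : (((∑ n ∈ Finset.range N, a n • t ^ n) x : E) : UniformSpace.Completion E) =
      (∑ n ∈ Finset.range N, a n • V ^ n) x := by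
    induction N with
    | zero => simp [UniformSpace.Completion.coe_zero]
    | succ N ih =>
      rw [Finset.sum_range_succ, Finset.sum_range_succ]
      rw [add_apply, add_apply, ← ih,
        UniformSpace.Completion.coe_add, smul_apply, smul_apply, ← hpow,
        UniformSpace.Completion.coe_smul]
  rw [← UniformSpace.Completion.norm_coe, key]
  refine (ContinuousLinearMap.le_opNorm _ _).trans (le_of_eq ?_)
  rw [UniformSpace.Completion.norm_coe]

theorem tendsto_core {A : Type*} [Ring A] [Algebra ℂ A] (c : PreInnerProductSpace.Core ℂ A)
    (K : A → ℝ) (hK0 : ∀ r, 0 ≤ K r)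
    (hK : ∀ r s, (c.inner (r * s) (r * s)).re ≤ K r ^ 2 * (c.inner s s).re)
    (t : A) (ht : ∀ s, (c.inner (t * s) (t * s)).re = (c.inner s s).re)
    (lam : ℂ) (hl : ‖lam‖ = 1) (hs : lam ∉ spectrum ℂ t)
    (a : ℕ → ℂ) (ha : Summable fun n : ℕ => ‖a n‖)
    (h0 : ∀ z ∈ spectrum ℂ t, ‖z‖ = 1 → ∑' n, a n * z ^ n = 0) :
    Tendsto (fun N => (c.inner (∑ n ∈ Finset.range N, a n • t ^ n)
      (∑ n ∈ Finset.range N, a n • t ^ n)).re) atTop (𝓝 0) := by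
  let i1 : SeminormedAddCommGroup A :=
    InnerProductSpace.Core.toSeminormedAddCommGroup (c := c)
  let i2 : InnerProductSpace ℂ A := InnerProductSpace.ofCore c
  have hn : ∀ s : A, ‖s‖ ^ 2 = (c.inner s s).re := fun s =>
    Real.sq_sqrt (c.re_inner_nonneg s)
  let φ : A →ₐ[ℂ] (A →L[ℂ] A) :=
    { toFun := fun r => (LinearMap.mulLeft ℂ r).mkContinuous (K r) (fun s => by
        refine le_of_sq_le_sq ?_ (mul_nonneg (hK0 r) (norm_nonneg _))
        rw [mul_pow, hn, hn]
        exact hK r s)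
      map_one' := by ext; simp
      map_mul' := fun r s => by ext; simp
      map_zero' := by ext; simp
      map_add' := fun r s => by ext; simp [add_mul]
      commutes' := fun z => by ext; simp [Algebra.algebraMap_eq_smul_one] }
  have hφ : ∀ r s, φ r s = r * s := fun r s => rfl
  have hsp := AlgHom.spectrum_apply_subset φ t
  have := tendsto_pre (φ t) (fun s => by
    rw [hφ, ← sq_eq_sq₀ (norm_nonneg _) (norm_nonneg _), hn, hn, ht]) lam hl
    (fun h => hs (hsp h)) a ha (fun z hz => h0 z (hsp hz)) 1
  have h2 := this.pow 2
  simp only [← map_pow, ← map_smul, ← map_sum, hφ, mul_one, hn] at h2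
  simpa using h2

theorem avg_eq {X : Type*} [NormedAddCommGroup X] [InnerProductSpace ℂ X]
    (N : ℕ) (w : ℕ → X) : (N : ℂ)⁻¹ * ∑ m ∈ Finset.range N, inner ℂ (w m) (w m) =
      (((N : ℝ)⁻¹ * ∑ m ∈ Finset.range N, ‖w m‖ ^ 2 : ℝ) : ℂ) := by
  simp [inner_self_eq_norm_sq_to_K]

theorem exists_core {A : Type*} [Ring A] [Algebra ℂ A]
    {X : Type*} [NormedAddCommGroup X] [InnerProductSpace ℂ X]
    (ρ : A →ₗ[ℂ] (X →L[ℂ] X)) (v : ℕ → ℕ → X) (C : ℝ) (hv : ∀ N m, ‖v N m‖ ≤ C)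
    (U : Ultrafilter ℕ) :
    ∃ c : PreInnerProductSpace.Core ℂ A, ∀ s r, Tendsto (fun N : ℕ => (N : ℂ)⁻¹ *
      ∑ m ∈ Finset.range N, inner ℂ (ρ s (v N m)) (ρ r (v N m))) U (𝓝 (c.inner s r)) := by
  have hC : 0 ≤ C := (norm_nonneg _).trans (hv 0 0)
  have hex : ∀ s r : A, ∃ l : ℂ, Tendsto (fun N : ℕ => (N : ℂ)⁻¹ *
      ∑ m ∈ Finset.range N, inner ℂ (ρ s (v N m)) (ρ r (v N m))) U (𝓝 l) := by
    intro s r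
    have hb : ∀ N : ℕ, (N : ℂ)⁻¹ *
      ∑ m ∈ Finset.range N, inner ℂ (ρ s (v N m)) (ρ r (v N m)) ∈
        Metric.closedBall (0 : ℂ) ((‖ρ s‖ * C) * (‖ρ r‖ * C)) := by
      intro N
      rw [mem_closedBall_zero_iff, norm_mul, norm_inv, Complex.norm_natCast]
      have h1 : ‖∑ m ∈ Finset.range N, inner ℂ (ρ s (v N m)) (ρ r (v N m))‖ ≤
          N * ((‖ρ s‖ * C) * (‖ρ r‖ * C)) := by
        refine (norm_sum_le_of_le _ (f := fun m => inner ℂ (ρ s (v N m)) (ρ r (v N m)))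
          (n := fun _ => (‖ρ s‖ * C) * (‖ρ r‖ * C)) fun m _ => ?_).trans (by simp)
        refine (norm_inner_le_norm _ _).trans ?_
        gcongr
        · exact (ContinuousLinearMap.le_opNorm _ _).trans (by gcongr; exact hv _ _)
        · exact (ContinuousLinearMap.le_opNorm _ _).trans (by gcongr; exact hv _ _)
      rcases Nat.eq_zero_or_pos N with h0 | h0
      · subst h0; simp; positivity
      · rw [inv_mul_le_iff₀ (by exact_mod_cast h0)]
        exact h1
    obtain ⟨l, -, hl⟩ := (isCompact_closedBall (0 : ℂ) ((‖ρ s‖ * C) * (‖ρ r‖ * C))).ultrafilter_le_nhds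
      (U.map _) (by
        rw [le_principal_iff]
        exact Filter.mem_map.2 (Filter.univ_mem' hb))
    exact ⟨l, hl⟩
  choose L hL using hex
  refine ⟨⟨⟨L⟩, ?_, ?_, ?_, ?_⟩, hL⟩
  · intro s r
    refine tendsto_nhds_unique ?_ (hL s r)
    have := (Complex.continuous_conj.tendsto _).comp (hL r s)
    refine this.congr fun N => ?_
    simp [inner_conj_symm]
  · intro s
    refine ge_of_tendsto ((Complex.continuous_re.tendsto _).comp (hL s s)) (Eventually.of_forall fun N => ?_)
    simp only [Function.comp, avg_eq]
    rw [Complex.ofReal_re]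
    positivity
  · intro s r q
    refine tendsto_nhds_unique (hL (s + r) q) (((hL s q).add (hL r q)).congr fun N => ?_)
    simp [Finset.sum_add_distrib, mul_add]
  · intro s r z
    refine tendsto_nhds_unique (hL (z • s) r) (((hL s r).const_mul (starRingEnd ℂ z)).congr fun N => ?_)
    simp only [map_smul, smul_apply, inner_smul_left]
    rw [← Finset.mul_sum]
    ring

theorem coeff_zero (a : ℕ → ℂ) (ha : Summable fun n : ℕ => ‖a n‖)
    (h : ∀ z : ℂ, ‖z‖ = 1 → ∑' n, a n * z ^ n = 0) (k : ℕ) : a k = 0 := by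
  have : Fact (0 < (1 : ℝ)) := ⟨one_pos⟩
  have hs : Summable fun n : ℕ => a n • (fourier (n : ℤ) : C(AddCircle (1 : ℝ), ℂ)) := by
    refine Summable.of_norm ?_
    simpa [norm_smul, fourier_norm] using ha
  have h0 : ∑' n : ℕ, a n • (fourier (n : ℤ) : C(AddCircle (1 : ℝ), ℂ)) = 0 := by
    ext y
    have h1 := (ContinuousMap.evalCLM ℂ y).map_tsum hs
    simp only [ContinuousMap.evalCLM_apply] at h1
    rw [h1]
    have h2 := h (AddCircle.toCircle y : Circle) (Circle.norm_coe _)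
    rw [ContinuousMap.zero_apply, ← h2]
    refine tsum_congr fun n => ?_
    simp [fourier_apply, AddCircle.toCircle_nsmul]
  have h1 := hs.hasSum
  rw [h0] at h1
  have h2 := h1.mapL (ContinuousMap.toLp (E := ℂ) 2 AddCircle.haarAddCircle ℂ)
  have h3 := h2.mapL (innerSL ℂ (fourierLp (T := 1) 2 (k : ℤ)))
  have ho := orthonormal_iff_ite.1 (orthonormal_fourier (T := 1))
  simp only [map_zero, map_smul, innerSL_apply_apply] at h3
  have h4 : ∀ n : ℕ, inner ℂ (fourierLp (T := 1) 2 (k : ℤ))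
    (ContinuousMap.toLp (E := ℂ) 2 AddCircle.haarAddCircle ℂ (fourier (T := 1) (n : ℤ))) = if k = n then (1 : ℂ) else 0 := by
    intro n
    have := ho k n
    simpa using this
  simp only [h4] at h3
  have h5 := h3.unique (hasSum_single k (fun n hn => by simp [hn.symm]))
  simpa using h5.symm

theorem symbol_zero {X : Type*} [NormedAddCommGroup X] [InnerProductSpace ℂ X] [CompleteSpace X]
    (T : X →L[ℂ] X) (a : ℕ → ℂ) (ha : Summable fun n : ℕ => ‖a n‖)
    (hs : Summable fun m : ℕ => a m • T ^ m) (lam : ℂ) (hlam : lam ∈ spectrum ℂ T) (hl : ‖lam‖ = 1)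
    (h : Tendsto (fun N : ℕ =>
          (1 / (N : ℝ)) * ‖∑ n ∈ Finset.range N, (starRingEnd ℂ lam) ^ n •
            (T ^ n * (∑' m : ℕ, a m • T ^ m))‖)
        atTop (nhds 0)) : ∑' n, a n * lam ^ n = 0 := by
  have hc : (starRingEnd ℂ) lam * lam = 1 := by
    have := Complex.conj_mul' lam
    rw [hl] at this
    simpa using this
  have hsl : Summable fun n => a n * lam ^ n := by
    refine Summable.of_norm ?_
    simpa [hl] using ha
  have key : ∀ N : ℕ, N * ‖∑' n, a n * lam ^ n‖ ≤ ‖∑ n ∈ Finset.range N, (starRingEnd ℂ lam) ^ n •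
            (T ^ n * (∑' m : ℕ, a m • T ^ m))‖ := by
    intro N
    have h1 : Tendsto (fun K => (N : ℝ) * ‖∑ n ∈ Finset.range K, a n * lam ^ n‖) atTop
        (𝓝 (N * ‖∑' n, a n * lam ^ n‖)) :=
      (hsl.hasSum.tendsto_sum_nat.norm).const_mul _
    have h2 : Tendsto (fun K => ‖∑ n ∈ Finset.range N, (starRingEnd ℂ lam) ^ n •
            (T ^ n * (∑ m ∈ Finset.range K, a m • T ^ m))‖) atTop
        (𝓝 ‖∑ n ∈ Finset.range N, (starRingEnd ℂ lam) ^ n •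
            (T ^ n * (∑' m : ℕ, a m • T ^ m))‖) := by
      refine Tendsto.norm (tendsto_finsetSum _ fun n _ => ?_)
      exact (hs.hasSum.tendsto_sum_nat.const_mul _).const_smul _
    refine le_of_tendsto_of_tendsto' h1 h2 fun K => ?_
    let p : Polynomial ℂ := ∑ m ∈ Finset.range K, Polynomial.monomial m (a m)
    let q : Polynomial ℂ := ∑ n ∈ Finset.range N, Polynomial.monomial n ((starRingEnd ℂ lam) ^ n)
    have hm : (q * p).eval lam ∈ spectrum ℂ (Polynomial.aeval T (q * p)) :=
      spectrum.subset_polynomial_aeval T (q * p) ⟨lam, hlam, rfl⟩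
    have hle := spectrum.norm_le_norm_mul_of_mem hm
    have h3 : (q * p).eval lam = N * ∑ n ∈ Finset.range K, a n * lam ^ n := by
      simp [p, q, Polynomial.eval_finsetSum, ← mul_pow, hc]
    have h4 : Polynomial.aeval T (q * p) = ∑ n ∈ Finset.range N, (starRingEnd ℂ lam) ^ n •
            (T ^ n * (∑ m ∈ Finset.range K, a m • T ^ m)) := by
      simp [p, q, Polynomial.aeval_monomial, Algebra.smul_def, Finset.sum_mul, mul_assoc]
    rw [h3, h4, norm_mul, Complex.norm_natCast] at hle
    refine hle.trans (mul_le_of_le_one_right (norm_nonneg _) ContinuousLinearMap.norm_id_le)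
  have : ‖∑' n, a n * lam ^ n‖ ≤ 0 := by
    refine ge_of_tendsto h ?_
    filter_upwards [eventually_gt_atTop 0] with N hN
    have hN' : (0 : ℝ) < N := by exact_mod_cast hN
    rw [one_div, le_inv_mul_iff₀ hN']
    exact key N
  exact norm_le_zero_iff.1 this

theorem main_aux {X : Type*} [NormedAddCommGroup X] [InnerProductSpace ℂ X] [CompleteSpace X]
    (T : X →L[ℂ] X) (M : ℝ) (hM : 1 ≤ M) (hT : ∀ n : ℕ, ‖T ^ n‖ ≤ M)
    (a : ℕ → ℂ) (ha : Summable fun n : ℕ => ‖a n‖)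
    (hs : Summable fun m : ℕ => a m • T ^ m)
    (h0 : ∀ z ∈ spectrum ℂ T, ‖z‖ = 1 → ∑' n, a n * z ^ n = 0)
    (lam : ℂ) (hl : ‖lam‖ = 1) (hlam : lam ∉ spectrum ℂ T)
    (c : ℝ) (hc : 0 < c) (hlow : ∀ n, c ≤ ‖T ^ n * (∑' m : ℕ, a m • T ^ m)‖) : False := by
  set Q := ∑' m : ℕ, a m • T ^ m with hQ
  have hM0 : 0 < M := by linarith
  have hx : ∀ N : ℕ, ∃ x : X, ‖x‖ < 1 ∧ c / 2 < ‖(T ^ N * Q) x‖ := fun N =>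
    ContinuousLinearMap.exists_lt_apply_of_lt_opNorm _ (by linarith [hlow N])
  choose x hx1 hx2 using hx
  have hcomm : ∀ n, Commute (T ^ n) Q := fun n =>
    Commute.tsum_right _ fun m => ((Commute.refl T).pow_pow n m).smul_right _
  let v : ℕ → ℕ → X := fun N m => (T ^ m) (x N)
  have hv : ∀ N m, ‖v N m‖ ≤ M := fun N m => by
    refine (ContinuousLinearMap.le_opNorm _ _).trans ?_
    calc _ ≤ M * 1 := by gcongr; exacts [hT m, (hx1 N).le]
      _ = M := mul_one M
  set δ := c / (2 * M) with hδ
  have hδ0 : 0 < δ := by positivity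
  have hvlow : ∀ N m, m ≤ N → δ ≤ ‖Q (v N m)‖ := by
    intro N m hmN
    have e : (T ^ N * Q) (x N) = (T ^ (N - m)) (Q (v N m)) := by
      have : T ^ N * Q = T ^ (N - m) * (Q * T ^ m) := by
        rw [← (hcomm m).eq, ← mul_assoc, ← pow_add, Nat.sub_add_cancel hmN]
      rw [this]; rfl
    have h1 := hx2 N
    rw [e] at h1
    have h2 := (ContinuousLinearMap.le_opNorm (T ^ (N - m)) (Q (v N m)))
    have h3 : ‖T ^ (N - m)‖ * ‖Q (v N m)‖ ≤ M * ‖Q (v N m)‖ := by gcongr; exact hT _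
    rw [hδ, div_le_iff₀ (by positivity)]
    linarith
  let A := Subalgebra.centralizer ℂ ({T} : Set (X →L[ℂ] X))
  let t : A := ⟨T, by simp [A, Subalgebra.mem_centralizer_iff]⟩
  have htc : ∀ s : A, t * s = s * t := by
    intro s
    apply Subtype.ext
    exact (Subalgebra.mem_centralizer_iff ℂ).1 s.2 T rfl
  have hspec : ∀ z, z ∉ spectrum ℂ T → z ∉ spectrum ℂ t := by
    intro z hz
    rw [spectrum.notMem_iff] at hz ⊢
    obtain ⟨u, hu⟩ := hz
    have hcu : Commute T u.val := by
      rw [hu]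
      exact Commute.sub_right (Algebra.commutes z T).symm (Commute.refl T)
    have hci : Commute T (u⁻¹).val := hcu.units_inv_right
    refine ⟨⟨algebraMap ℂ A z - t, ⟨(u⁻¹).val, ?_⟩, ?_, ?_⟩, rfl⟩
    · rw [Subalgebra.mem_centralizer_iff]
      rintro g rfl
      exact hci.eq
    · apply Subtype.ext
      change (algebraMap ℂ (X →L[ℂ] X) z - T) * (u⁻¹).val = 1
      rw [← hu, u.mul_inv]
    · apply Subtype.ext
      change (u⁻¹).val * (algebraMap ℂ (X →L[ℂ] X) z - T) = 1
      rw [← hu, u.inv_mul]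
  let ρ : A →ₐ[ℂ] (X →L[ℂ] X) := A.val
  have hρv : ∀ (s : A) N m, ρ (t * s) (v N m) = ρ s (v N (m + 1)) := by
    intro s N m
    rw [htc, map_mul, mul_apply_eq_comp]
    congr 1
    change T ((T ^ m) (x N)) = (T ^ (m + 1)) (x N)
    rw [pow_succ', mul_apply_eq_comp]
  obtain ⟨core, hcore⟩ := exists_core ρ.toLinearMap v M hv (hyperfilter ℕ)
  have hreal : ∀ s : A, Tendsto (fun N : ℕ => (N : ℝ)⁻¹ * ∑ m ∈ Finset.range N, ‖ρ s (v N m)‖ ^ 2)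
      (hyperfilter ℕ) (𝓝 (core.inner s s).re) := by
    intro s
    refine ((Complex.continuous_re.tendsto _).comp (hcore s s)).congr fun N => ?_
    simp only [Function.comp, avg_eq]
    rw [Complex.ofReal_re]
    rfl
  have hle : (hyperfilter ℕ : Filter ℕ) ≤ atTop := Nat.hyperfilter_le_atTop
  have hb : ∀ (s : A) N m, ‖ρ s (v N m)‖ ≤ ‖ρ s‖ * M := fun s N m =>
    (ContinuousLinearMap.le_opNorm _ _).trans (by gcongr; exact hv N m)
  have hiso : ∀ s : A, (core.inner (t * s) (t * s)).re = (core.inner s s).re := by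
    intro s
    have hd : Tendsto (fun N : ℕ => (N : ℝ)⁻¹ * (‖ρ s (v N N)‖ ^ 2 - ‖ρ s (v N 0)‖ ^ 2))
        atTop (𝓝 0) := by
      have hb2 : Tendsto (fun N : ℕ => (N : ℝ)⁻¹ * (2 * (‖ρ s‖ * M) ^ 2)) atTop (𝓝 0) := by
        simpa using (tendsto_inv_atTop_nhds_zero_nat (𝕜 := ℝ)).mul_const (2 * (‖ρ s‖ * M) ^ 2)
      refine squeeze_zero_norm (fun N => ?_) hb2
      rw [norm_mul, norm_inv, Real.norm_natCast]
      gcongr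
      rw [Real.norm_eq_abs, abs_le]
      have h1 : ‖ρ s (v N N)‖ ^ 2 ≤ (‖ρ s‖ * M) ^ 2 := by gcongr; exact hb s N N
      have h2 : ‖ρ s (v N 0)‖ ^ 2 ≤ (‖ρ s‖ * M) ^ 2 := by gcongr; exact hb s N 0
      constructor <;> nlinarith [sq_nonneg ‖ρ s (v N N)‖, sq_nonneg ‖ρ s (v N 0)‖]
    have h3 := (hreal s).add (hd.mono_left hle)
    rw [add_zero] at h3
    refine tendsto_nhds_unique (hreal (t * s)) (h3.congr fun N => ?_)
    simp only [hρv]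
    rw [← mul_add]
    congr 1
    have e1 := Finset.sum_range_succ (fun m => ‖ρ s (v N m)‖ ^ 2) N
    have e2 := Finset.sum_range_succ' (fun m => ‖ρ s (v N m)‖ ^ 2) N
    linarith
  have hK : ∀ r s : A, (core.inner (r * s) (r * s)).re ≤ ‖ρ r‖ ^ 2 * (core.inner s s).re := by
    intro r s
    refine le_of_tendsto_of_tendsto' (hreal (r * s)) ((hreal s).const_mul (‖ρ r‖ ^ 2)) fun N => ?_
    have hN : (0 : ℝ) ≤ (N : ℝ)⁻¹ := by positivity
    change (N : ℝ)⁻¹ * _ ≤ ‖ρ r‖ ^ 2 * ((N : ℝ)⁻¹ * _)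
    rw [mul_left_comm (‖ρ r‖ ^ 2), Finset.mul_sum _ _ (‖ρ r‖ ^ 2)]
    refine mul_le_mul_of_nonneg_left (Finset.sum_le_sum fun m hm => ?_) hN
    rw [← mul_pow]
    refine pow_le_pow_left₀ (norm_nonneg _) ?_ 2
    rw [map_mul, mul_apply_eq_comp]
    exact ContinuousLinearMap.le_opNorm _ _
  have hfin := tendsto_core core (fun r => ‖ρ r‖) (fun r => norm_nonneg _) hK t hiso lam hl
    (hspec lam hlam) a ha (fun z hz => h0 z (by
      by_contra hcon
      exact hspec z hcon hz))
  have hQt : Tendsto (fun K => ‖Q - ∑ m ∈ Finset.range K, a m • T ^ m‖ * M) atTop (𝓝 0) := by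
    have := ((tendsto_const_nhds (x := Q)).sub hs.hasSum.tendsto_sum_nat).norm.mul_const M
    simpa [← hQ] using this
  have hsmall := hfin.eventually (gt_mem_nhds (show (0 : ℝ) < (δ / 2) ^ 2 by positivity))
  obtain ⟨K, hK1, hK2⟩ := (hsmall.and (hQt.eventually (gt_mem_nhds (half_pos hδ0)))).exists
  refine absurd hK1 (not_lt.2 ?_)
  refine ge_of_tendsto (hreal _) (hle ?_)
  filter_upwards [eventually_gt_atTop 0] with N hN
  have hN' : (0 : ℝ) < N := by exact_mod_cast hN
  rw [le_inv_mul_iff₀ hN']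
  have : ∀ m ∈ Finset.range N, (δ / 2) ^ 2 ≤
      ‖ρ (∑ n ∈ Finset.range K, a n • t ^ n) (v N m)‖ ^ 2 := by
    intro m hm
    gcongr
    have e : ρ (∑ n ∈ Finset.range K, a n • t ^ n) = ∑ n ∈ Finset.range K, a n • T ^ n := by
      simp only [map_sum, map_smul, map_pow]
      rfl
    rw [e]
    have h1 := hvlow N m (Finset.mem_range.1 hm).le
    have h2 := ContinuousLinearMap.le_opNorm (Q - ∑ n ∈ Finset.range K, a n • T ^ n) (v N m)
    have h3 : ‖Q - ∑ n ∈ Finset.range K, a n • T ^ n‖ * ‖v N m‖ ≤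
      ‖Q - ∑ n ∈ Finset.range K, a n • T ^ n‖ * M := by gcongr; exact hv N m
    rw [sub_apply] at h2
    have h4 := norm_sub_norm_le (Q (v N m)) ((∑ n ∈ Finset.range K, a n • T ^ n) (v N m))
    linarith
  have h5 := Finset.card_nsmul_le_sum _ _ _ this
  simpa using h5

end KT


/-- ℤ₊-instance of Proposition 3.7: if `T` is power-bounded on a complex Hilbert space,
`a ∈ ℓ¹(ℕ)`, and for every `λ ∈ σ(T) ∩ 𝕋` the Cesàro averages
`(1/N)·‖∑_{n<N} conj(λ)ⁿ Tⁿ â(T)‖` tend to `0`, then `‖Tⁿ â(T)‖ → 0`. -/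
theorem stmt_5 {X : Type*} [NormedAddCommGroup X] [InnerProductSpace ℂ X] [CompleteSpace X]
    (T : X →L[ℂ] X) (hT : ∃ M : ℝ, ∀ n : ℕ, ‖T ^ n‖ ≤ M)
    (a : ℕ → ℂ) (ha : Summable fun n : ℕ => ‖a n‖)
    (h : ∀ lam ∈ spectrum ℂ T, ‖lam‖ = 1 →
      Tendsto (fun N : ℕ =>
          (1 / (N : ℝ)) * ‖∑ n ∈ Finset.range N, (starRingEnd ℂ lam) ^ n •
            (T ^ n * (∑' m : ℕ, a m • T ^ m))‖)
        atTop (nhds 0)) :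
    Tendsto (fun n : ℕ => ‖T ^ n * (∑' m : ℕ, a m • T ^ m)‖) atTop (nhds 0) := by
  obtain ⟨M₀, hM₀⟩ := hT
  set M := max M₀ 1 with hMdef
  have hM : 1 ≤ M := le_max_right _ _
  have hTM : ∀ n : ℕ, ‖T ^ n‖ ≤ M := fun n => (hM₀ n).trans (le_max_left _ _)
  have hs : Summable fun m : ℕ => a m • T ^ m := by
    refine Summable.of_norm_bounded (ha.mul_right M) fun m => ?_
    rw [norm_smul]
    gcongr
    exact hTM m
  have h0 : ∀ z ∈ spectrum ℂ T, ‖z‖ = 1 → ∑' n, a n * z ^ n = 0 := fun z hz hz1 =>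
    KT.symbol_zero T a ha hs z hz hz1 (h z hz hz1)
  by_cases hall : ∀ z : ℂ, ‖z‖ = 1 → z ∈ spectrum ℂ T
  · have ha0 := KT.coeff_zero a ha (fun z hz => h0 z (hall z hz) hz)
    simp [ha0]
  · push Not at hall
    obtain ⟨lam, hl, hlam⟩ := hall
    rw [Metric.tendsto_atTop]
    intro ε hε
    have hM0 : 0 < M := by linarith
    by_contra hcon
    push Not at hcon
    refine KT.main_aux T M hM hTM a ha hs h0 lam hl hlam (ε / M) (by positivity) fun n => ?_
    obtain ⟨k, hk, hk2⟩ := hcon n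
    rw [dist_zero_right, norm_norm] at hk2
    rw [div_le_iff₀ hM0]
    refine hk2.trans ?_
    rw [← Nat.sub_add_cancel hk, pow_add, mul_assoc, mul_comm _ M]
    refine (norm_mul_le _ _).trans ?_
    gcongr
    exact hTM _
end

section
/- Let X be a complex Banach space, let T ∈ B(X) be power-bounded, and let a ∈ ℓ¹(ℕ). Then for every λ ∈ σ(T) ∩ 𝕋 and every n ∈ ℕ, |â(λ)| ≤ ‖Tⁿ â(T)‖. (ℤ₊-instance of Lemma 3.8 of the paper.) -/
open Filter Topology

/-- ℤ₊-instance of Lemma 3.8: if `T` is power-bounded on a complex Banach space and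
`a ∈ ℓ¹(ℕ)`, then `|â(λ)| ≤ ‖Tⁿ â(T)‖` for every `λ ∈ σ(T) ∩ 𝕋` and every `n`. -/
theorem stmt_6 {X : Type*} [NormedAddCommGroup X] [NormedSpace ℂ X] [CompleteSpace X]
    (T : X →L[ℂ] X) (hT : ∃ M : ℝ, ∀ n : ℕ, ‖T ^ n‖ ≤ M)
    (a : ℕ → ℂ) (ha : Summable fun n : ℕ => ‖a n‖) :
    ∀ lam ∈ spectrum ℂ T, ‖lam‖ = 1 →
      ∀ n : ℕ, ‖∑' m : ℕ, a m * lam ^ m‖ ≤ ‖T ^ n * (∑' m : ℕ, a m • T ^ m)‖ := by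
  intro lam hlam h1 n
  obtain ⟨M, hM⟩ := hT
  have hs1 : Summable fun m => a m * lam ^ m := by
    apply Summable.of_norm
    simpa [h1] using ha
  have hs2 : Summable fun m => a m • T ^ m := by
    apply Summable.of_norm_bounded (ha.mul_right M)
    intro m
    rw [norm_smul]
    exact mul_le_mul_of_nonneg_left (hM m) (norm_nonneg _)
  have t1 := hs1.hasSum.tendsto_sum_nat.norm
  have t2 := (hs2.hasSum.tendsto_sum_nat.const_mul (T ^ n)).norm
  refine le_of_tendsto_of_tendsto' t1 t2 fun N => ?_
  let p : Polynomial ℂ :=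
    Polynomial.X ^ n * ∑ m ∈ Finset.range N, Polynomial.C (a m) * Polynomial.X ^ m
  have hp : Polynomial.aeval T p = T ^ n * ∑ m ∈ Finset.range N, a m • T ^ m := by
    simp [p, map_sum, Algebra.smul_def]
  have he : Polynomial.eval lam p = lam ^ n * ∑ m ∈ Finset.range N, a m * lam ^ m := by
    simp [p, Polynomial.eval_finset_sum]
  have hmem : Polynomial.eval lam p ∈ spectrum ℂ (Polynomial.aeval T p) :=
    spectrum.subset_polynomial_aeval T p ⟨lam, hlam, rfl⟩
  have hle := spectrum.norm_le_norm_mul_of_mem hmem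
  rw [he, hp, norm_mul, norm_pow, h1, one_pow, one_mul] at hle
  refine hle.trans (mul_le_of_le_one_right (norm_nonneg _) ?_)
  exact ContinuousLinearMap.norm_id_le
end

section
/- Let X be a complex Hilbert space, let T ∈ B(X) be power-bounded, and let a ∈ ℓ¹(ℕ). Then the following three statements are equivalent: (i) â(λ) = 0 for every λ ∈ σ(T) ∩ 𝕋; (ii) for every λ ∈ σ(T) ∩ 𝕋, (1/N)·‖∑_{n=0}^{N-1} conj(λ)ⁿ Tⁿ â(T)‖ → 0 as N → ∞ (operator norm); (iii) ‖Tⁿ â(T)‖ → 0 as n → ∞. (ℤ₊-instance, with Følner sets the intervals {0,…,N−1}, of Theorem 3.1 of the paper.) -/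
open Filter Topology

theorem kt_parseval {X : Type*} [NormedAddCommGroup X] [InnerProductSpace ℂ X]
    (N : ℕ) (z : ℂ) (hz : IsPrimitiveRoot z N) (hz1 : ‖z‖ = 1) (y : ℕ → X) :
    ∑ k ∈ Finset.range N, ‖∑ n ∈ Finset.range N, (starRingEnd ℂ (z ^ k)) ^ n • y n‖ ^ 2
      = N * ∑ n ∈ Finset.range N, ‖y n‖ ^ 2 := by
  have hzz : z * starRingEnd ℂ z = 1 := by
    rw [Complex.mul_conj, Complex.normSq_eq_norm_sq, hz1]; simp
  have key : ∀ n ∈ Finset.range N, ∀ m ∈ Finset.range N,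
      ∑ k ∈ Finset.range N, (z ^ n * (starRingEnd ℂ z) ^ m) ^ k = if n = m then (N : ℂ) else 0 := by
    intro n hn m hm
    rw [Finset.mem_range] at hn hm
    split_ifs with h
    · subst h
      rw [← mul_pow, hzz]; simp
    · have hq : z ^ n * (starRingEnd ℂ z) ^ m ≠ 1 := by
        intro hq
        apply h
        apply hz.pow_inj hn hm
        calc z ^ n = z ^ n * (z * starRingEnd ℂ z) ^ m := by rw [hzz]; simp
          _ = (z ^ n * (starRingEnd ℂ z) ^ m) * z ^ m := by ring
          _ = z ^ m := by rw [hq, one_mul]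
      have h1 := geom_sum_mul (z ^ n * (starRingEnd ℂ z) ^ m) N
      have h2 : (z ^ n * (starRingEnd ℂ z) ^ m) ^ N = 1 := by
        rw [mul_pow, ← pow_mul, ← pow_mul, mul_comm n, mul_comm m, pow_mul, pow_mul, ← map_pow,
          hz.pow_eq_one]; simp
      rw [h2, sub_self] at h1
      exact (mul_eq_zero.mp h1).resolve_right (sub_ne_zero.mpr hq)
  have : ((∑ k ∈ Finset.range N,
      ‖∑ n ∈ Finset.range N, (starRingEnd ℂ (z ^ k)) ^ n • y n‖ ^ 2 : ℝ) : ℂ)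
      = ((N * ∑ n ∈ Finset.range N, ‖y n‖ ^ 2 : ℝ) : ℂ) := by
    push_cast
    calc _ = ∑ k ∈ Finset.range N, ∑ n ∈ Finset.range N, ∑ m ∈ Finset.range N,
          (z ^ n * (starRingEnd ℂ z) ^ m) ^ k * inner ℂ (y n) (y m) := by
          refine Finset.sum_congr rfl fun k _ => ?_
          have := inner_self_eq_norm_sq_to_K (𝕜 := ℂ)
            (∑ n ∈ Finset.range N, (starRingEnd ℂ (z ^ k)) ^ n • y n)
          rw [← Complex.coe_algebraMap] at *
          erw [← this]
          rw [sum_inner]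
          refine Finset.sum_congr rfl fun n _ => ?_
          rw [inner_sum]
          refine Finset.sum_congr rfl fun m _ => ?_
          rw [inner_smul_left, inner_smul_right]
          simp only [map_pow, Complex.conj_conj]
          ring
      _ = ∑ n ∈ Finset.range N, ∑ m ∈ Finset.range N, (∑ k ∈ Finset.range N,
          (z ^ n * (starRingEnd ℂ z) ^ m) ^ k) * inner ℂ (y n) (y m) := by
          rw [Finset.sum_comm]
          refine Finset.sum_congr rfl fun n _ => ?_
          rw [Finset.sum_comm]
          refine Finset.sum_congr rfl fun m _ => ?_
          rw [Finset.sum_mul]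
      _ = ∑ n ∈ Finset.range N, (N : ℂ) * (‖y n‖ : ℂ) ^ 2 := by
          refine Finset.sum_congr rfl fun n hn => ?_
          rw [Finset.sum_congr rfl fun m hm => by rw [key n hn m hm]]
          simp only [ite_mul, zero_mul]
          rw [Finset.sum_ite_eq, if_pos hn]
          congr 1
          exact inner_self_eq_norm_sq_to_K (𝕜 := ℂ) (y n)
      _ = _ := by rw [Finset.mul_sum]
  exact_mod_cast this

section
variable {X : Type*} [NormedAddCommGroup X] [InnerProductSpace ℂ X] [CompleteSpace X]

theorem kt_spec_le (T : X →L[ℂ] X) {lam : ℂ} (hl : lam ∈ spectrum ℂ T) (p : Polynomial ℂ) :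
    ‖p.eval lam‖ ≤ ‖Polynomial.aeval T p‖ := by
  have : p.eval lam ∈ spectrum ℂ (Polynomial.aeval T p) :=
    spectrum.subset_polynomial_aeval T p ⟨lam, hl, rfl⟩
  have h1 : Nontrivial X := by
    by_contra h
    rw [not_nontrivial_iff_subsingleton] at h
    exact hl (isUnit_of_subsingleton _)
  exact spectrum.norm_le_norm_of_mem this

theorem kt_summable (T : X →L[ℂ] X) {M : ℝ} (hT : ∀ n : ℕ, ‖T ^ n‖ ≤ M)
    (a : ℕ → ℂ) (ha : Summable fun n : ℕ => ‖a n‖) : Summable fun m => ‖a m • T ^ m‖ := by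
  refine Summable.of_nonneg_of_le (fun _ => norm_nonneg _) (fun m => ?_) (ha.mul_right M)
  rw [norm_smul]
  gcongr
  exact hT m

theorem kt_ii_i (T : X →L[ℂ] X) {M : ℝ} (hT : ∀ n : ℕ, ‖T ^ n‖ ≤ M)
    (a : ℕ → ℂ) (ha : Summable fun n : ℕ => ‖a n‖) {lam : ℂ} (hl : lam ∈ spectrum ℂ T)
    (hl1 : ‖lam‖ = 1)
    (h : Tendsto (fun N : ℕ =>
            (1 / (N : ℝ)) * ‖∑ n ∈ Finset.range N, (starRingEnd ℂ lam) ^ n •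
              (T ^ n * (∑' m : ℕ, a m • T ^ m))‖)
          atTop (nhds 0)) : (∑' m : ℕ, a m * lam ^ m) = 0 := by
  have hs : Summable fun m => a m * lam ^ m :=
    Summable.of_norm (by simpa [hl1] using ha)
  have hS := (kt_summable T hT a ha).of_norm
  have hll : starRingEnd ℂ lam * lam = 1 := by
    rw [mul_comm, Complex.mul_conj, Complex.normSq_eq_norm_sq, hl1]; simp
  have key : ∀ N : ℕ, N * ‖∑' m : ℕ, a m * lam ^ m‖ ≤ ‖∑ n ∈ Finset.range N,
      (starRingEnd ℂ lam) ^ n • (T ^ n * (∑' m : ℕ, a m • T ^ m))‖ := by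
    intro N
    have t1 : Tendsto (fun k => (N : ℝ) * ‖∑ m ∈ Finset.range k, a m * lam ^ m‖) atTop
        (𝓝 (N * ‖∑' m : ℕ, a m * lam ^ m‖)) :=
      (hs.hasSum.tendsto_sum_nat.norm).const_mul _
    have t2 : Tendsto (fun k => ‖∑ n ∈ Finset.range N,
      (starRingEnd ℂ lam) ^ n • (T ^ n * (∑ m ∈ Finset.range k, a m • T ^ m))‖) atTop
        (𝓝 ‖∑ n ∈ Finset.range N,
      (starRingEnd ℂ lam) ^ n • (T ^ n * (∑' m : ℕ, a m • T ^ m))‖) := by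
      refine Tendsto.norm (tendsto_finsetSum _ fun n _ => ?_)
      exact (hS.hasSum.tendsto_sum_nat.const_mul _).const_smul _
    refine le_of_tendsto_of_tendsto' t1 t2 fun k => ?_
    have := kt_spec_le T hl (∑ n ∈ Finset.range N, Polynomial.C ((starRingEnd ℂ lam) ^ n) *
      (Polynomial.X ^ n * ∑ m ∈ Finset.range k, Polynomial.C (a m) * Polynomial.X ^ m))
    simp only [map_sum, map_mul, map_pow, Polynomial.aeval_X, Polynomial.aeval_C,
      Polynomial.eval_finset_sum, Polynomial.eval_mul, Polynomial.eval_C, Polynomial.eval_pow,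
      Polynomial.eval_X, ← mul_assoc, ← mul_pow, hll] at this
    simp only [one_pow, one_mul, Finset.sum_const, Finset.card_range, nsmul_eq_mul, norm_mul,
      Complex.norm_natCast] at this
    refine this.trans (le_of_eq ?_)
    congr 1
    refine Finset.sum_congr rfl fun n _ => ?_
    rw [Algebra.smul_def, (Algebra.commute_algebraMap_left _ T).mul_pow, mul_assoc]
    simp only [Algebra.smul_def, map_pow]
  have h0 : ‖∑' m : ℕ, a m * lam ^ m‖ ≤ 0 := by
    refine ge_of_tendsto h ?_
    filter_upwards [eventually_gt_atTop 0] with N hN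
    have hN' : (0 : ℝ) < N := by exact_mod_cast hN
    rw [one_div, inv_mul_eq_div, le_div_iff₀ hN', mul_comm]
    exact key N
  simpa using h0

theorem kt_iii_ii (T Q : X →L[ℂ] X) {lam : ℂ} (hl1 : ‖lam‖ = 1)
    (h : Tendsto (fun n : ℕ => ‖T ^ n * Q‖) atTop (nhds 0)) :
    Tendsto (fun N : ℕ =>
            (1 / (N : ℝ)) * ‖∑ n ∈ Finset.range N, (starRingEnd ℂ lam) ^ n • (T ^ n * Q)‖)
          atTop (nhds 0) := by
  have hc := h.cesaro
  refine squeeze_zero (fun N => by positivity) (fun N => ?_) hc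
  rw [one_div]
  gcongr
  refine (norm_sum_le _ _).trans (Finset.sum_le_sum fun n _ => ?_)
  rw [norm_smul, norm_pow, RCLike.norm_conj, hl1]
  simp

/-- resolvent is uniformly bounded on compact subsets of the resolvent set -/
theorem kt_resolvent (T : X →L[ℂ] X) (K : Set ℂ) (hK : IsCompact K)
    (h : ∀ z ∈ K, z ∉ spectrum ℂ T) :
    ∃ C : ℝ, 0 ≤ C ∧ ∀ z ∈ K, ∃ B : X →L[ℂ] X, (T - algebraMap ℂ _ z) * B = 1 ∧ ‖B‖ ≤ C := by
  have hc : ContinuousOn (resolvent T) K := by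
    intro z hz
    have hz' : z ∈ resolventSet ℂ T := by
      have := h z hz
      simpa [spectrum] using this
    exact (spectrum.hasDerivAt_resolvent hz').continuousAt.continuousWithinAt
  obtain ⟨C, hC⟩ := hK.exists_bound_of_continuousOn hc
  refine ⟨max C 0, le_max_right _ _, fun z hz => ⟨-resolvent T z, ?_, ?_⟩⟩
  · have hz' : IsUnit (algebraMap ℂ (X →L[ℂ] X) z - T) := by
      have := h z hz
      simpa [spectrum, resolventSet] using this
    have := Ring.mul_inverse_cancel _ hz'
    rw [resolvent, mul_neg, ← neg_mul, neg_sub, this]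
  · rw [norm_neg]
    exact (hC z hz).trans (le_max_left _ _)

theorem kt_geom (T : X →L[ℂ] X) (N : ℕ) (w : ℂ) (hw : ‖w‖ = 1) (hwN : w ^ N = 1) :
    (∑ n ∈ Finset.range N, (starRingEnd ℂ w) ^ n • T ^ n) * ((starRingEnd ℂ w) • T - 1)
      = T ^ N - 1 := by
  have := geom_sum_mul ((starRingEnd ℂ w) • T) N
  simp only [smul_pow] at this
  rw [this, ← map_pow, hwN]
  simp

theorem kt_far (T : X →L[ℂ] X) {M : ℝ} (hT : ∀ n : ℕ, ‖T ^ n‖ ≤ M) (N : ℕ) (w : ℂ)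
    (hw : ‖w‖ = 1) (hwN : w ^ N = 1) (B : X →L[ℂ] X) (hB : (T - algebraMap ℂ _ w) * B = 1)
    {C : ℝ} (hC : ‖B‖ ≤ C) :
    ‖∑ n ∈ Finset.range N, (starRingEnd ℂ w) ^ n • T ^ n‖ ≤ (M + 1) * C := by
  have hg := kt_geom T N w hw hwN
  have hww : w * starRingEnd ℂ w = 1 := by
    rw [Complex.mul_conj, Complex.normSq_eq_norm_sq, hw]; simp
  set S := ∑ n ∈ Finset.range N, (starRingEnd ℂ w) ^ n • T ^ n
  have h1 : T - algebraMap ℂ _ w = w • ((starRingEnd ℂ w) • T - 1) := by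
    rw [smul_sub, smul_smul, hww, one_smul, Algebra.algebraMap_eq_smul_one]
  have h2 : S = w • ((T ^ N - 1) * B) := by
    calc S = S * ((T - algebraMap ℂ _ w) * B) := by rw [hB, mul_one]
      _ = _ := by rw [h1, smul_mul_assoc, mul_smul_comm, ← mul_assoc, hg]
  rw [h2, norm_smul, hw, one_mul]
  have h3 : ‖T ^ N - 1‖ ≤ M + 1 := by
    refine (norm_sub_le _ _).trans (add_le_add (hT N) ?_)
    exact ContinuousLinearMap.norm_id_le
  refine (norm_mul_le _ _).trans ?_
  have : 0 ≤ M + 1 := (norm_nonneg _).trans h3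
  gcongr

theorem kt_near (T : X →L[ℂ] X) {M : ℝ} (hT : ∀ n : ℕ, ‖T ^ n‖ ≤ M) (N : ℕ) (w : ℂ)
    (hw : ‖w‖ = 1) (hwN : w ^ N = 1) (a : ℕ → ℂ) (k : ℕ) :
    ‖(∑ n ∈ Finset.range N, (starRingEnd ℂ w) ^ n • T ^ n) *
      (∑ m ∈ Finset.range k, a m • T ^ m - (∑ m ∈ Finset.range k, a m * w ^ m) • 1)‖
      ≤ ∑ m ∈ Finset.range k, ‖a m‖ * ((M + 1) * (m * M)) := by
  have hg := kt_geom T N w hw hwN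
  have hww : w * starRingEnd ℂ w = 1 := by
    rw [Complex.mul_conj, Complex.normSq_eq_norm_sq, hw]; simp
  set S := ∑ n ∈ Finset.range N, (starRingEnd ℂ w) ^ n • T ^ n
  have h3 : ‖T ^ N - 1‖ ≤ M + 1 := by
    refine (norm_sub_le _ _).trans (add_le_add (hT N) ?_)
    exact ContinuousLinearMap.norm_id_le
  have hM : 0 ≤ M + 1 := (norm_nonneg _).trans h3
  rw [Finset.sum_smul, ← Finset.sum_sub_distrib, Finset.mul_sum]
  refine (norm_sum_le _ _).trans (Finset.sum_le_sum fun m _ => ?_)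
  have h1 : a m • T ^ m - (a m * w ^ m) • 1
      = (a m * w ^ m) • (((starRingEnd ℂ w) • T - 1) *
        ∑ i ∈ Finset.range m, ((starRingEnd ℂ w) • T) ^ i) := by
    rw [mul_geom_sum, smul_sub, smul_pow, smul_smul, mul_assoc, ← mul_pow, hww, one_pow, mul_one]
  rw [h1, mul_smul_comm, ← mul_assoc, hg, norm_smul, norm_mul, norm_pow, hw, one_pow, mul_one]
  gcongr
  refine (norm_mul_le _ _).trans ?_
  gcongr
  refine (norm_sum_le _ _).trans ?_
  refine (Finset.sum_le_card_nsmul _ _ M fun i _ => ?_).trans (by simp)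
  rw [smul_pow, norm_smul, norm_pow, RCLike.norm_conj, hw, one_pow, one_mul]
  exact hT i

theorem kt_main (T : X →L[ℂ] X) {M : ℝ} (hT : ∀ n : ℕ, ‖T ^ n‖ ≤ M)
    (a : ℕ → ℂ) (ha : Summable fun n : ℕ => ‖a n‖)
    (h : ∀ lam ∈ spectrum ℂ T, ‖lam‖ = 1 → (∑' m : ℕ, a m * lam ^ m) = 0)
    (e : ℝ) (he : 0 < e) :
    ∃ A : ℝ, ∀ N : ℕ, 0 < N → ‖T ^ N * (∑' m : ℕ, a m • T ^ m)‖ ^ 2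
      ≤ A / N + (3 * M ^ 6 + 12 * M ^ 4) * e ^ 2 := by
  have hM : 0 ≤ M := (norm_nonneg _).trans (hT 0)
  have hS := (kt_summable T hT a ha).of_norm
  set Q := ∑' m : ℕ, a m • T ^ m with hQ
  -- truncation
  obtain ⟨k, hk⟩ : ∃ k, ∑' m, ‖a (m + k)‖ < e :=
    ((tendsto_sum_nat_add fun m => ‖a m‖).eventually (gt_mem_nhds he)).exists
  have hak : Summable fun m => ‖a (m + k)‖ := (summable_nat_add_iff k).2 ha
  set P := ∑ m ∈ Finset.range k, a m • T ^ m with hP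
  set p : ℂ → ℂ := fun w => ∑ m ∈ Finset.range k, a m * w ^ m with hp
  set R := ∑' m, a (m + k) • T ^ (m + k) with hR
  have hQPR : Q = P + R := (hS.sum_add_tsum_nat_add k).symm
  have hRn : ‖R‖ ≤ M * e := by
    have hle : ∀ m, ‖a (m + k) • T ^ (m + k)‖ ≤ ‖a (m + k)‖ * M := fun m => by
      rw [norm_smul]; gcongr; exact hT _
    refine (tsum_of_norm_bounded (hak.mul_right M).hasSum hle).trans ?_
    rw [tsum_mul_right, mul_comm]
    gcongr
  -- far set
  let K : Set ℂ := Metric.sphere 0 1 ∩ {w | 2 * e ≤ ‖p w‖}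
  have hKc : IsCompact K := by
    refine (isCompact_sphere _ _).inter_right (isClosed_le continuous_const ?_)
    fun_prop
  have hKs : ∀ z ∈ K, z ∉ spectrum ℂ T := by
    rintro z ⟨hz, hz2⟩ hzs
    have hz1 : ‖z‖ = 1 := by simpa using hz
    have h0 := h z hzs hz1
    have hs : Summable fun m => a m * z ^ m :=
      Summable.of_norm (by simpa [hz1] using ha)
    have h1 := hs.sum_add_tsum_nat_add k
    rw [h0] at h1
    have h2 : ‖∑' m, a (m + k) * z ^ (m + k)‖ ≤ ∑' m, ‖a (m + k)‖ :=
      tsum_of_norm_bounded hak.hasSum (fun m => by simp [hz1])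
    have h3 : p z = - ∑' m, a (m + k) * z ^ (m + k) := eq_neg_of_add_eq_zero_left h1
    have hz2' : 2 * e ≤ ‖p z‖ := hz2
    rw [h3, norm_neg] at hz2'
    linarith
  obtain ⟨C, hC0, hC⟩ := kt_resolvent T K hKc hKs
  set D := ∑ m ∈ Finset.range k, ‖a m‖ * ((M + 1) * (m * M)) with hD
  set F := (M + 1) * C * ‖Q‖ with hF
  refine ⟨M ^ 2 * (F ^ 2 + 3 * D ^ 2), fun N hN => ?_⟩
  have hN' : (0 : ℝ) < N := by exact_mod_cast hN
  set z : ℂ := Complex.exp (2 * Real.pi * Complex.I / N) with hzdef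
  have hz : IsPrimitiveRoot z N := Complex.isPrimitiveRoot_exp N hN.ne'
  have hz1 : ‖z‖ = 1 := hz.norm'_eq_one hN.ne'
  let S : ℕ → X →L[ℂ] X := fun j => ∑ n ∈ Finset.range N, (starRingEnd ℂ (z ^ j)) ^ n • T ^ n
  have hSapp : ∀ j x, S j x = ∑ n ∈ Finset.range N, (starRingEnd ℂ (z ^ j)) ^ n • (T ^ n) x := by
    intro j x; simp [S, ContinuousLinearMap.sum_apply]
  have pars : ∀ x, ∑ j ∈ Finset.range N, ‖S j x‖ ^ 2
      = N * ∑ n ∈ Finset.range N, ‖(T ^ n) x‖ ^ 2 := by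
    intro x
    rw [← kt_parseval N z hz hz1 (fun n => (T ^ n) x)]
    simp only [hSapp]
  have parsle : ∀ x, ∑ j ∈ Finset.range N, ‖S j x‖ ^ 2 ≤ N ^ 2 * M ^ 2 * ‖x‖ ^ 2 := by
    intro x
    rw [pars x]
    have : ∑ n ∈ Finset.range N, ‖(T ^ n) x‖ ^ 2 ≤ N * (M * ‖x‖) ^ 2 := by
      refine (Finset.sum_le_card_nsmul _ _ ((M * ‖x‖) ^ 2) fun i _ => ?_).trans (by simp)
      gcongr
      exact (T ^ i).le_of_opNorm_le (hT i) x
    calc _ ≤ N * (N * (M * ‖x‖) ^ 2) := by gcongr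
      _ = _ := by ring
  have bound : ∀ x, ∀ j ∈ Finset.range N, ‖S j (Q x)‖ ^ 2 ≤ F ^ 2 * ‖x‖ ^ 2 + 3 * (D ^ 2 * ‖x‖ ^ 2
      + ‖S j (R x)‖ ^ 2 + 4 * e ^ 2 * ‖S j x‖ ^ 2) := by
    intro x j _
    have hw : ‖z ^ j‖ = 1 := by rw [norm_pow, hz1, one_pow]
    have hwN : (z ^ j) ^ N = 1 := by rw [← pow_mul, mul_comm, pow_mul, hz.pow_eq_one, one_pow]
    by_cases hj : z ^ j ∈ K
    · obtain ⟨B, hB, hBC⟩ := hC _ hj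
      have hf : ‖S j‖ ≤ (M + 1) * C := kt_far T hT N _ hw hwN B hB hBC
      have : ‖S j (Q x)‖ ≤ F * ‖x‖ := by
        refine ((S j).le_of_opNorm_le hf _).trans ?_
        rw [hF, mul_assoc ((M + 1) * C)]
        gcongr
        exact Q.le_opNorm x
      have h2 : ‖S j (Q x)‖ ^ 2 ≤ (F * ‖x‖) ^ 2 := by gcongr
      rw [mul_pow] at h2
      have : 0 ≤ 3 * (D ^ 2 * ‖x‖ ^ 2 + ‖S j (R x)‖ ^ 2 + 4 * e ^ 2 * ‖S j x‖ ^ 2) := by positivity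
      linarith
    · have hpj : ‖p (z ^ j)‖ ≤ 2 * e := by
        by_contra hcon
        exact hj ⟨by simpa using hw, (not_le.1 hcon).le⟩
      have hn : ‖S j * (P - p (z ^ j) • 1)‖ ≤ D := kt_near T hT N _ hw hwN a k
      have hdec : S j (Q x) = (S j * (P - p (z ^ j) • 1)) x + S j (R x) + p (z ^ j) • S j x := by
        rw [hQPR]
        simp [mul_sub]
        abel
      have h1 : ‖(S j * (P - p (z ^ j) • 1)) x‖ ≤ D * ‖x‖ := ContinuousLinearMap.le_of_opNorm_le _ hn x
      have h2 : ‖p (z ^ j) • S j x‖ ≤ 2 * e * ‖S j x‖ := by rw [norm_smul]; gcongr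
      have h3 : ‖S j (Q x)‖ ≤ D * ‖x‖ + ‖S j (R x)‖ + 2 * e * ‖S j x‖ := by
        rw [hdec]
        refine (norm_add₃_le).trans ?_
        gcongr
      have h4 : ‖S j (Q x)‖ ^ 2 ≤ (D * ‖x‖ + ‖S j (R x)‖ + 2 * e * ‖S j x‖) ^ 2 := by gcongr
      have h5 : 0 ≤ F ^ 2 * ‖x‖ ^ 2 := by positivity
      nlinarith [sq_nonneg (D * ‖x‖ - ‖S j (R x)‖), sq_nonneg (D * ‖x‖ - 2 * e * ‖S j x‖),
        sq_nonneg (‖S j (R x)‖ - 2 * e * ‖S j x‖)]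
  set G := M ^ 2 * (F ^ 2 + 3 * D ^ 2) / N + (3 * M ^ 6 + 12 * M ^ 4) * e ^ 2 with hG
  have hG0 : 0 ≤ G := by positivity
  have fin : ∀ x, ‖(T ^ N * Q) x‖ ^ 2 ≤ G * ‖x‖ ^ 2 := by
    intro x
    have l1 : N * ‖(T ^ N * Q) x‖ ^ 2 ≤ M ^ 2 * ∑ n ∈ Finset.range N, ‖(T ^ n) (Q x)‖ ^ 2 := by
      rw [Finset.mul_sum]
      have := Finset.card_nsmul_le_sum (Finset.range N)
        (fun n => M ^ 2 * ‖(T ^ n) (Q x)‖ ^ 2) (‖(T ^ N * Q) x‖ ^ 2) (fun n hn => ?_)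
      · simpa using this
      · rw [Finset.mem_range] at hn
        have e1 : (T ^ N * Q) x = (T ^ (N - n)) ((T ^ n) (Q x)) := by
          rw [← ContinuousLinearMap.mul_apply, ← ContinuousLinearMap.mul_apply, 
            ← pow_add, Nat.sub_add_cancel hn.le]
        show ‖(T ^ N * Q) x‖ ^ 2 ≤ M ^ 2 * ‖(T ^ n) (Q x)‖ ^ 2
        rw [e1, ← mul_pow]
        gcongr
        exact ContinuousLinearMap.le_of_opNorm_le _ (hT _) _
    have l2 := Finset.sum_le_sum (bound x)
    rw [pars] at l2
    simp only [Finset.sum_add_distrib, ← Finset.mul_sum, Finset.sum_const, Finset.card_range,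
      nsmul_eq_mul] at l2
    have l3 := parsle x
    have l4 := parsle (R x)
    have l5 : ‖R x‖ ^ 2 ≤ (M * e * ‖x‖) ^ 2 := by
      gcongr
      exact R.le_of_opNorm_le hRn x
    have l6 : N * ∑ n ∈ Finset.range N, ‖(T ^ n) (Q x)‖ ^ 2 ≤
        N * (F ^ 2 * ‖x‖ ^ 2) + 3 * (N * (D ^ 2 * ‖x‖ ^ 2) + N ^ 2 * M ^ 2 * (M * e * ‖x‖) ^ 2
          + 4 * e ^ 2 * (N ^ 2 * M ^ 2 * ‖x‖ ^ 2)) := by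
      have l4' : ∑ j ∈ Finset.range N, ‖S j (R x)‖ ^ 2 ≤ N ^ 2 * M ^ 2 * (M * e * ‖x‖) ^ 2 :=
        l4.trans (by gcongr)
      have l3' : 4 * e ^ 2 * ∑ j ∈ Finset.range N, ‖S j x‖ ^ 2
          ≤ 4 * e ^ 2 * (N ^ 2 * M ^ 2 * ‖x‖ ^ 2) := by gcongr
      linarith
    have l7 : (N : ℝ) ^ 2 * ‖(T ^ N * Q) x‖ ^ 2 ≤ N ^ 2 * (G * ‖x‖ ^ 2) := by
      calc (N : ℝ) ^ 2 * ‖(T ^ N * Q) x‖ ^ 2 = N * (N * ‖(T ^ N * Q) x‖ ^ 2) := by ring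
        _ ≤ N * (M ^ 2 * ∑ n ∈ Finset.range N, ‖(T ^ n) (Q x)‖ ^ 2) := by gcongr
        _ = M ^ 2 * (N * ∑ n ∈ Finset.range N, ‖(T ^ n) (Q x)‖ ^ 2) := by ring
        _ ≤ M ^ 2 * _ := mul_le_mul_of_nonneg_left l6 (by positivity)
        _ = _ := by rw [hG]; field_simp; ring
    exact le_of_mul_le_mul_left l7 (by positivity)
  have hle : ‖T ^ N * Q‖ ≤ Real.sqrt G := by
    refine ContinuousLinearMap.opNorm_le_bound _ (Real.sqrt_nonneg _) fun x => ?_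
    refine (pow_le_pow_iff_left₀ (norm_nonneg _) (by positivity) two_ne_zero).1 ?_
    rw [mul_pow, Real.sq_sqrt hG0]
    exact fin x
  calc ‖T ^ N * Q‖ ^ 2 ≤ Real.sqrt G ^ 2 := by gcongr
    _ = G := Real.sq_sqrt hG0

theorem kt_i_iii (T : X →L[ℂ] X) {M : ℝ} (hT : ∀ n : ℕ, ‖T ^ n‖ ≤ M)
    (a : ℕ → ℂ) (ha : Summable fun n : ℕ => ‖a n‖)
    (h : ∀ lam ∈ spectrum ℂ T, ‖lam‖ = 1 → (∑' m : ℕ, a m * lam ^ m) = 0) :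
    Tendsto (fun n : ℕ => ‖T ^ n * (∑' m : ℕ, a m • T ^ m)‖) atTop (nhds 0) := by
  have hM : 0 ≤ M := (norm_nonneg _).trans (hT 0)
  rw [Metric.tendsto_atTop']
  intro d hd
  set c := 3 * M ^ 6 + 12 * M ^ 4 with hc
  have hc0 : 0 ≤ c := by positivity
  obtain ⟨A, hA⟩ := kt_main T hT a ha h (d / Real.sqrt (2 * (c + 1))) (by positivity)
  have ht : Tendsto (fun N : ℕ => A / (N : ℝ)) atTop (𝓝 0) := tendsto_const_div_atTop_nhds_zero_nat A
  have hev := ht.eventually (gt_mem_nhds (show 0 < d ^ 2 / 2 by positivity))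
  obtain ⟨N0, hN0⟩ := eventually_atTop.1 hev
  refine ⟨N0, fun n hn => ?_⟩
  have h1 := hA n (by omega)
  have h2 := hN0 n hn.le
  have h3 : c * (d / Real.sqrt (2 * (c + 1))) ^ 2 ≤ d ^ 2 / 2 := by
    rw [div_pow, Real.sq_sqrt (by positivity), mul_div_assoc', div_le_div_iff₀ (by positivity) (by positivity)]
    nlinarith [sq_nonneg d]
  rw [dist_zero_right, norm_norm]
  refine lt_of_pow_lt_pow_left₀ 2 hd.le ?_
  linarith

end

/-- ℤ₊-instance of Theorem 3.1: for a power-bounded operator `T` on a complex Hilbert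
space and `a ∈ ℓ¹(ℕ)`, the following are equivalent: (i) `â` vanishes on `σ(T) ∩ 𝕋`;
(ii) the Cesàro averages `(1/N)·‖∑_{n<N} conj(λ)ⁿ Tⁿ â(T)‖` tend to `0` for every
`λ ∈ σ(T) ∩ 𝕋`; (iii) `‖Tⁿ â(T)‖ → 0`. -/
theorem stmt_7 {X : Type*} [NormedAddCommGroup X] [InnerProductSpace ℂ X] [CompleteSpace X]
    (T : X →L[ℂ] X) (hT : ∃ M : ℝ, ∀ n : ℕ, ‖T ^ n‖ ≤ M)
    (a : ℕ → ℂ) (ha : Summable fun n : ℕ => ‖a n‖) :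
    [ (∀ lam ∈ spectrum ℂ T, ‖lam‖ = 1 → (∑' m : ℕ, a m * lam ^ m) = 0),
      (∀ lam ∈ spectrum ℂ T, ‖lam‖ = 1 →
        Tendsto (fun N : ℕ =>
            (1 / (N : ℝ)) * ‖∑ n ∈ Finset.range N, (starRingEnd ℂ lam) ^ n •
              (T ^ n * (∑' m : ℕ, a m • T ^ m))‖)
          atTop (nhds 0)),
      Tendsto (fun n : ℕ => ‖T ^ n * (∑' m : ℕ, a m • T ^ m)‖) atTop (nhds 0) ].TFAE := by
  obtain ⟨M, hM⟩ := hT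
  tfae_have 1 → 3 := kt_i_iii T hM a ha
  tfae_have 3 → 2 := fun h lam _ hl1 => kt_iii_ii T _ hl1 h
  tfae_have 2 → 1 := fun h lam hl hl1 => kt_ii_i T hM a ha hl hl1 (h lam hl hl1)
  tfae_finish
end

section
/- Let X be a complex Hilbert space, let T ∈ B(X) be power-bounded, and let a ∈ ℓ¹(ℕ) be such that â(λ) = 0 for every λ ∈ σ(T) ∩ 𝕋. Then ‖Tⁿ â(T)‖ → 0 as n → ∞ in the operator norm. (The implication (i)⇒(iii) of Theorem 3.1; Léka's Katznelson–Tzafriri theorem for power-bounded operators on Hilbert space.) -/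
open Filter Topology

theorem kt_core1 {K : Type*} [NormedAddCommGroup K] [NormedSpace ℂ K]
    {S : Set ℂ} [CompactSpace S] (φ : C(S, ℂ) →ₐ[ℂ] (K →L[ℂ] K)) (hφ : ∀ f, ‖φ f‖ ≤ ‖f‖)
    (D : K →L[ℂ] K) (hD : ∀ f, Commute (φ f) D)
    (ι : C(S, ℂ)) (hι : ∀ z : S, ι z = z)
    (ξ : ℕ → K) (B : ℝ) (hB : ∀ k, ‖ξ k‖ ≤ B)
    (hξ : Tendsto (fun k => ‖(φ ι - D) (ξ k)‖) atTop (𝓝 0))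
    (f : C(S, ℂ))
    (hf : ∀ z : S, f z = 0 ∨ ∃ R : K →L[ℂ] K, R * ((z : ℂ) • 1 - D) = 1) :
    Tendsto (fun k => ‖φ f (ξ k)‖) atTop (𝓝 0) := by
  have hB0 : 0 ≤ B := (norm_nonneg _).trans (hB 0)
  let J : Ideal C(S, ℂ) :=
    { carrier := {g | Tendsto (fun k => ‖φ g (ξ k)‖) atTop (𝓝 0)}
      add_mem' := by
        intro g h hg hh
        simp only [Set.mem_ofPred_eq, ← tendsto_zero_iff_norm_tendsto_zero] at *
        simpa using hg.add hh
      zero_mem' := by simp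
      smul_mem' := by
        intro c g hg
        simp only [Set.mem_ofPred_eq, ← tendsto_zero_iff_norm_tendsto_zero] at *
        have := ((φ c).continuous.tendsto 0).comp hg
        simpa [Function.comp_def] using this }
  have hJm : ∀ g, g ∈ J ↔ Tendsto (fun k => ‖φ g (ξ k)‖) atTop (𝓝 0) := fun g => Iff.rfl
  have hJ : IsClosed (J : Set C(S, ℂ)) := by
    rw [← closure_subset_iff_isClosed]
    intro g hg
    rw [SetLike.mem_coe, hJm]
    rw [Metric.tendsto_atTop]
    intro ε hε
    obtain ⟨h, hh, hgh⟩ := Metric.mem_closure_iff.1 hg (ε / (2 * (B + 1))) (by positivity)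
    rw [SetLike.mem_coe, hJm, Metric.tendsto_atTop] at hh
    obtain ⟨N, hN⟩ := hh (ε / 2) (by positivity)
    refine ⟨N, fun n hn => ?_⟩
    have h1 := hN n hn
    simp only [dist_zero_right, norm_norm] at h1 ⊢
    have h2 : φ g (ξ n) = φ (g - h) (ξ n) + φ h (ξ n) := by simp
    have h3 : ‖φ (g - h) (ξ n)‖ ≤ ε / (2 * (B + 1)) * (B + 1) := by
      refine ((φ (g - h)).le_opNorm _).trans ?_
      refine mul_le_mul ((hφ _).trans ?_) ((hB n).trans (by linarith)) (norm_nonneg _) (by positivity)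
      rw [← dist_eq_norm]; exact hgh.le
    have h4 : ε / (2 * (B + 1)) * (B + 1) = ε / 2 := by field_simp
    rw [h2]
    have := norm_add_le (φ (g - h) (ξ n)) (φ h (ξ n))
    linarith
  suffices f ∈ J from this
  rw [← ContinuousMap.idealOfSet_ofIdeal_isClosed hJ, ContinuousMap.mem_idealOfSet]
  intro z hz
  rw [Set.mem_compl_iff, ContinuousMap.notMem_setOfIdeal] at hz
  refine (hf z).resolve_right ?_
  rintro ⟨R, hR⟩
  -- radius
  let r : ℝ := 1 / (2 * (‖R‖ + 1))
  have hr : 0 < r := by positivity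
  have hRr : ‖R‖ * r ≤ 1 / 2 := by
    simp only [r]
    rw [mul_one_div, div_le_iff₀ (by positivity)]
    linarith
  let g : C(S, ℂ) := ⟨fun w => ((max 0 (r - ‖(z : ℂ) - w‖) : ℝ) : ℂ), by fun_prop⟩
  let q : C(S, ℂ) := ⟨fun w => ((z : ℂ) - w) * ((r / max r ‖(z : ℂ) - w‖ : ℝ) : ℂ), by
    refine Continuous.mul (by fun_prop) (Complex.continuous_ofReal.comp ?_)
    refine Continuous.div (by fun_prop) (by fun_prop) fun w => ?_
    exact (lt_of_lt_of_le hr (le_max_left _ _)).ne'⟩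
  have hq : ‖q‖ ≤ r := by
    rw [ContinuousMap.norm_le _ hr.le]
    intro w
    have hm : 0 < max r ‖(z : ℂ) - w‖ := lt_of_lt_of_le hr (le_max_left _ _)
    simp only [q, ContinuousMap.coe_mk, norm_mul, Complex.norm_real, Real.norm_eq_abs]
    rw [abs_of_pos (by positivity), ← mul_div_assoc, div_le_iff₀ hm, mul_comm]
    exact mul_le_mul_of_nonneg_left (le_max_right _ _) hr.le
  have hqg : (algebraMap ℂ C(S, ℂ) (z : ℂ) - ι) * g = q * g := by
    ext w
    simp only [ContinuousMap.mul_apply, ContinuousMap.sub_apply, hι]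
    by_cases hw : ‖(z : ℂ) - w‖ < r
    · have : q w = (z : ℂ) - w := by
        simp [q, max_eq_left hw.le, hr.ne']
      rw [this]; rfl
    · have : g w = 0 := by
        simp only [g, ContinuousMap.coe_mk]
        rw [max_eq_left (by linarith)]; simp
      simp [this]
  have hgJ : g ∈ J := by
    rw [hJm]
    have key : ∀ k, ‖φ g (ξ k)‖ ≤ 2 * ‖R‖ * ‖g‖ * ‖(φ ι - D) (ξ k)‖ := by
      intro k
      have e1 : φ g (ξ k) = R (((z : ℂ) • 1 - D) (φ g (ξ k))) := by
        have := congrArg (fun A : K →L[ℂ] K => A (φ g (ξ k))) hR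
        simpa using this.symm
      have e2 : ((z : ℂ) • 1 - D) (φ g (ξ k)) = φ q (φ g (ξ k)) + φ g ((φ ι - D) (ξ k)) := by
        have h1 : ((z : ℂ) • 1 - D) * φ g = φ q * φ g + φ g * (φ ι - D) := by
          rw [← map_mul, ← hqg, map_mul, map_sub, AlgHom.commutes, Algebra.algebraMap_eq_smul_one,
            mul_sub, sub_mul, sub_mul, (hD g).eq, ← map_mul, ← map_mul, mul_comm g ι]
          abel
        have := congrArg (fun A : K →L[ℂ] K => A (ξ k)) h1
        simpa using this
      have n1 : ‖φ g (ξ k)‖ ≤ ‖R‖ * (r * ‖φ g (ξ k)‖ + ‖g‖ * ‖(φ ι - D) (ξ k)‖) := by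
        conv_lhs => rw [e1]
        refine (R.le_opNorm _).trans (mul_le_mul_of_nonneg_left ?_ (norm_nonneg _))
        rw [e2]
        refine (norm_add_le _ _).trans (add_le_add ?_ ?_)
        · exact ((φ q).le_opNorm _).trans
            (mul_le_mul_of_nonneg_right ((hφ q).trans hq) (norm_nonneg _))
        · exact ((φ g).le_opNorm _).trans
            (mul_le_mul_of_nonneg_right (hφ g) (norm_nonneg _))
      have n2 := mul_le_mul_of_nonneg_right hRr (norm_nonneg (φ g (ξ k)))
      nlinarith
    refine squeeze_zero (fun _ => norm_nonneg _) key ?_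
    simpa using hξ.const_mul (2 * ‖R‖ * ‖g‖)
  have := hz hgJ
  simp [g] at this
  linarith

theorem kt_core2 {K : Type*} [NormedAddCommGroup K] [InnerProductSpace ℂ K] [CompleteSpace K]
    (U D : K →L[ℂ] K) (hU : U ∈ unitary (K →L[ℂ] K)) (hUD : Commute U D)
    (M : ℝ) (hM : ∀ n : ℕ, ‖D ^ n‖ ≤ M)
    (a : ℕ → ℂ) (ha : Summable fun n : ℕ => ‖a n‖)
    (h : ∀ z : ℂ, ‖z‖ = 1 → (∑' m : ℕ, a m * z ^ m) = 0 ∨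
      ∃ R : K →L[ℂ] K, R * (z • 1 - D) = 1)
    (ξ : ℕ → K) (B : ℝ) (hB : ∀ k, ‖ξ k‖ ≤ B)
    (hξ : Tendsto (fun k => ‖(U - D) (ξ k)‖) atTop (𝓝 0)) :
    Tendsto (fun k => ‖(∑' m : ℕ, a m • D ^ m) (ξ k)‖) atTop (𝓝 0) := by
  have hB0 : 0 ≤ B := (norm_nonneg _).trans (hB 0)
  have hn : IsStarNormal U := ⟨by
    rw [commute_iff_eq, (Unitary.mem_iff.1 hU).1, (Unitary.mem_iff.1 hU).2]⟩
  have hUD' : Commute (star U) D := by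
    have h1 := (Unitary.mem_iff.1 hU).1
    have h2 := (Unitary.mem_iff.1 hU).2
    calc star U * D = star U * D * (U * star U) := by rw [h2, mul_one]
      _ = star U * (D * U) * star U := by simp only [mul_assoc]
      _ = star U * (U * D) * star U := by rw [hUD.eq]
      _ = (star U * U) * D * star U := by simp only [mul_assoc]
      _ = D * star U := by rw [h1, one_mul]
  let φ := cfcHom (R := ℂ) hn
  let ι : C(spectrum ℂ U, ℂ) := (ContinuousMap.id ℂ).restrict (spectrum ℂ U)
  have hφι : φ ι = U := cfcHom_id hn
  have hφn : ∀ f, ‖φ f‖ = ‖f‖ := fun f => norm_cfcHom U f hn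
  have hD : ∀ f, Commute (φ f) D := fun f => Commute.cfcHom hn hUD hUD' f
  have hι : ∀ z : spectrum ℂ U, ι z = z := fun z => rfl
  have hιn : ‖ι‖ ≤ 1 := by
    rw [ContinuousMap.norm_le _ zero_le_one]
    intro z
    have := spectrum.subset_circle_of_unitary hU z.2
    simpa [hι] using this.le
  have hpow : ∀ m, ‖ι ^ m‖ ≤ 1 := by
    intro m
    rw [ContinuousMap.norm_le _ zero_le_one]
    intro z
    have := spectrum.subset_circle_of_unitary hU z.2
    have h2 : ‖(z : ℂ)‖ = 1 := by simpa using this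
    simp [hι, h2]
  have hsum : Summable fun m => a m • ι ^ m := by
    refine Summable.of_norm_bounded ha fun m => ?_
    rw [norm_smul]
    exact mul_le_of_le_one_right (norm_nonneg _) (hpow m)
  let f : C(spectrum ℂ U, ℂ) := ∑' m, a m • ι ^ m
  have hfz : ∀ z, f z = ∑' m, a m * (z : ℂ) ^ m := by
    intro z
    simp only [f]
    rw [← ContinuousMap.tsum_apply hsum]
    simp [hι]
  have hφc : Continuous φ := cfcHom_continuous hn
  have hφs : HasSum (fun m => a m • U ^ m) (φ f) := by
    have := hsum.hasSum.map φ hφc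
    simpa [Function.comp_def, hφι] using this
  have hDs : Summable fun m => a m • D ^ m := by
    refine Summable.of_norm_bounded (ha.mul_right M) fun m => ?_
    rw [norm_smul]
    exact mul_le_mul_of_nonneg_left (hM m) (norm_nonneg _)
  have c1 : Tendsto (fun k => ‖φ f (ξ k)‖) atTop (𝓝 0) := by
    refine kt_core1 (φ : C(spectrum ℂ U, ℂ) →ₐ[ℂ] (K →L[ℂ] K)) (fun f => (hφn f).le) D hD ι hι ξ B hB
      ?_ f ?_
    · simpa [hφι] using hξ
    · intro z
      rw [hfz]
      exact h z (by simpa using spectrum.subset_circle_of_unitary hU z.2)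
  have hpw : ∀ m : ℕ, Tendsto (fun k => (D ^ m - U ^ m) (ξ k)) atTop (𝓝 0) := by
    intro m
    induction m with
    | zero => simp
    | succ m ih =>
      have e : D ^ (m + 1) - U ^ (m + 1) = D * (D ^ m - U ^ m) - U ^ m * (U - D) := by
        rw [pow_succ', pow_succ U, mul_sub, mul_sub, (hUD.pow_left m).eq]
        abel
      rw [e]
      have t1 := (D.continuous.tendsto 0).comp ih
      have t2 := ((U ^ m).continuous.tendsto 0).comp (tendsto_zero_iff_norm_tendsto_zero.2 hξ)
      simp only [map_zero] at t1 t2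
      simpa [Function.comp_def] using t1.sub t2
  have c2 : Tendsto (fun k => ∑' m, a m • (D ^ m - U ^ m) (ξ k)) atTop (𝓝 (∑' _ : ℕ, (0 : K))) := by
    refine tendsto_tsum_of_dominated_convergence (bound := fun m => ‖a m‖ * ((M + 1) * B))
      (ha.mul_right _) (fun m => ?_) (Eventually.of_forall fun k m => ?_)
    · simpa using (hpw m).const_smul (a m)
    · rw [norm_smul]
      refine mul_le_mul_of_nonneg_left ?_ (norm_nonneg _)
      refine ((D ^ m - U ^ m).le_opNorm _).trans ?_
      have hUm : ‖U ^ m‖ ≤ 1 := by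
        rw [← hφι, ← map_pow, hφn]; exact hpow m
      have h1 : ‖D ^ m - U ^ m‖ ≤ M + 1 := (norm_sub_le _ _).trans (add_le_add (hM m) hUm)
      exact mul_le_mul h1 (hB k) (norm_nonneg _) ((norm_nonneg _).trans h1)
  rw [tsum_zero] at c2
  rw [← tendsto_zero_iff_norm_tendsto_zero] at c1 ⊢
  have := c2.add c1
  rw [add_zero] at this
  refine this.congr fun k => ?_
  have hd : HasSum (fun m => a m • D ^ m - a m • U ^ m) ((∑' m : ℕ, a m • D ^ m) - φ f) :=
    hDs.hasSum.sub hφs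
  have hd2 := hd.mapL (ContinuousLinearMap.apply ℂ K (ξ k))
  have hd3 : ∑' m, a m • (D ^ m - U ^ m) (ξ k) = ((∑' m : ℕ, a m • D ^ m) - φ f) (ξ k) := by
    refine HasSum.tsum_eq ?_
    simpa [smul_sub] using hd2
  rw [hd3]; simp

theorem kt_diag_mem {X : Type*} [NormedAddCommGroup X] [InnerProductSpace ℂ X]
    (A : X →L[ℂ] X) (f : lp (fun _ : ℤ => X) 2) :
    Memℓp (fun i => A (f i) : ∀ _ : ℤ, X) 2 := by
  refine memℓp_gen ?_
  have hs := (lp.memℓp f).summable (by simp)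
  refine Summable.of_nonneg_of_le (fun _ => by positivity) (fun i => ?_)
    (hs.mul_left (‖A‖ ^ (2 : ENNReal).toReal))
  rw [← Real.mul_rpow (norm_nonneg _) (norm_nonneg _)]
  exact Real.rpow_le_rpow (norm_nonneg _) (A.le_opNorm _) (by simp)

/-- The diagonal operator on `ℓ²(ℤ, X)` induced by `A`. -/
noncomputable def ktDiag {X : Type*} [NormedAddCommGroup X] [InnerProductSpace ℂ X]
    (A : X →L[ℂ] X) : lp (fun _ : ℤ => X) 2 →L[ℂ] lp (fun _ : ℤ => X) 2 :=
  LinearMap.mkContinuous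
    { toFun := fun f => ⟨fun i => A (f i), kt_diag_mem A f⟩
      map_add' := fun f g => by ext i; exact A.map_add _ _
      map_smul' := fun c f => by ext i; simp } ‖A‖ (fun f => by
    have h2 : (0 : ℝ) < (2 : ENNReal).toReal := by simp
    refine lp.norm_le_of_forall_sum_le h2 (by positivity) fun s => ?_
    rw [Real.mul_rpow (norm_nonneg _) (norm_nonneg _)]
    refine le_trans ?_ (mul_le_mul_of_nonneg_left (lp.sum_rpow_le_norm_rpow h2 f s) (by positivity))
    rw [Finset.mul_sum]
    refine Finset.sum_le_sum fun i _ => ?_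
    rw [← Real.mul_rpow (norm_nonneg _) (norm_nonneg _)]
    exact Real.rpow_le_rpow (norm_nonneg _) (A.le_opNorm _) (by simp))

theorem ktDiag_apply {X : Type*} [NormedAddCommGroup X] [InnerProductSpace ℂ X]
    (A : X →L[ℂ] X) (f : lp (fun _ : ℤ => X) 2) (i : ℤ) : ktDiag A f i = A (f i) := rfl

theorem ktDiag_norm {X : Type*} [NormedAddCommGroup X] [InnerProductSpace ℂ X]
    (A : X →L[ℂ] X) : ‖ktDiag A‖ ≤ ‖A‖ :=
  LinearMap.mkContinuous_norm_le _ (norm_nonneg _) _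

theorem ktDiag_mul {X : Type*} [NormedAddCommGroup X] [InnerProductSpace ℂ X]
    (A B : X →L[ℂ] X) : ktDiag (A * B) = ktDiag A * ktDiag B := by
  ext f i; rfl

theorem ktDiag_one {X : Type*} [NormedAddCommGroup X] [InnerProductSpace ℂ X] :
    ktDiag (1 : X →L[ℂ] X) = 1 := by
  ext f i; rfl

theorem ktDiag_pow {X : Type*} [NormedAddCommGroup X] [InnerProductSpace ℂ X]
    (A : X →L[ℂ] X) (n : ℕ) : ktDiag (A ^ n) = ktDiag A ^ n := by
  induction n with
  | zero => simp [ktDiag_one]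
  | succ n ih => rw [pow_succ, ktDiag_mul, ih, pow_succ]

theorem ktDiag_single {X : Type*} [NormedAddCommGroup X] [InnerProductSpace ℂ X]
    (A : X →L[ℂ] X) (i : ℤ) (v : X) :
    ktDiag A (lp.single 2 i v) = lp.single 2 i (A v) := by
  ext j
  rw [ktDiag_apply, lp.single_apply, lp.single_apply]
  by_cases h : j = i
  · subst h; simp
  · simp [Pi.single_eq_of_ne h]

theorem kt_shift_mem {X : Type*} [NormedAddCommGroup X] (c : ℤ) (f : lp (fun _ : ℤ => X) 2) :
    Memℓp (fun i => f (i + c) : ∀ _ : ℤ, X) 2 := by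
  refine memℓp_gen ?_
  have hs := (lp.memℓp f).summable (by simp)
  exact (Equiv.addRight c).summable_iff.2 hs

/-- The bilateral shift on `ℓ²(ℤ, X)`. -/
noncomputable def ktShift (X : Type*) [NormedAddCommGroup X] [InnerProductSpace ℂ X] :
    lp (fun _ : ℤ => X) 2 ≃ₗᵢ[ℂ] lp (fun _ : ℤ => X) 2 where
  toFun f := ⟨fun i => f (i + 1), kt_shift_mem 1 f⟩
  invFun f := ⟨fun i => f (i + (-1)), kt_shift_mem (-1) f⟩
  map_add' f g := by ext i; rfl
  map_smul' c f := by ext i; simp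
  left_inv f := by ext i; simp
  right_inv f := by ext i; simp
  norm_map' f := by
    have h2 : (0 : ℝ) < (2 : ENNReal).toReal := by simp
    rw [lp.norm_eq_tsum_rpow h2, lp.norm_eq_tsum_rpow h2]
    congr 1
    exact (Equiv.addRight (1 : ℤ)).tsum_eq (fun i => ‖f i‖ ^ (2 : ENNReal).toReal)

theorem ktShift_apply {X : Type*} [NormedAddCommGroup X] [InnerProductSpace ℂ X]
    (f : lp (fun _ : ℤ => X) 2) (i : ℤ) : ktShift X f i = f (i + 1) := rfl

theorem ktShift_single {X : Type*} [NormedAddCommGroup X] [InnerProductSpace ℂ X]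
    (i : ℤ) (v : X) :
    ktShift X (lp.single 2 i v) = lp.single 2 (i - 1) v := by
  ext j
  rw [ktShift_apply, lp.single_apply, lp.single_apply]
  by_cases h : j = i - 1
  · subst h; simp
  · rw [Pi.single_eq_of_ne h, Pi.single_eq_of_ne (by omega)]

theorem kt_norm_sum {X : Type*} [NormedAddCommGroup X] [InnerProductSpace ℂ X]
    (v : ℕ → X) (n : ℕ) :
    ‖∑ m ∈ Finset.range n, (lp.single 2 (m : ℤ) (v m) : lp (fun _ : ℤ => X) 2)‖ ^ 2
      = ∑ m ∈ Finset.range n, ‖v m‖ ^ 2 := by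
  have := lp.norm_sum_single (E := fun _ : ℤ => X) (p := 2) (by simp) (fun i => v i.toNat)
    ((Finset.range n).map Nat.castEmbedding)
  simpa using this

theorem kt_shift_sub {X : Type*} [NormedAddCommGroup X] [InnerProductSpace ℂ X]
    (T : X →L[ℂ] X) (x : X) (n : ℕ) :
    ktShift X (∑ m ∈ Finset.range n, lp.single 2 (m : ℤ) ((T ^ m) x)) -
      ktDiag T (∑ m ∈ Finset.range n, lp.single 2 (m : ℤ) ((T ^ m) x)) =
    lp.single 2 (-1 : ℤ) x - lp.single 2 ((n : ℤ) - 1) ((T ^ n) x) := by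
  induction n with
  | zero => simp
  | succ n ih =>
    rw [Finset.sum_range_succ, map_add, map_add, add_sub_add_comm, ih, ktShift_single,
      ktDiag_single]
    have : T ((T ^ n) x) = (T ^ (n + 1)) x := by rw [pow_succ']; rfl
    rw [this]
    push_cast
    rw [add_sub_cancel_right]
    abel

/-- Léka's Katznelson–Tzafriri theorem (implication (i)⇒(iii) of Theorem 3.1): if `T`
is power-bounded on a complex Hilbert space and `a ∈ ℓ¹(ℕ)` satisfies `â(λ) = 0` for
every `λ ∈ σ(T) ∩ 𝕋`, then `‖Tⁿ â(T)‖ → 0`. -/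
theorem stmt_8 {X : Type*} [NormedAddCommGroup X] [InnerProductSpace ℂ X] [CompleteSpace X]
    (T : X →L[ℂ] X) (hT : ∃ M : ℝ, ∀ n : ℕ, ‖T ^ n‖ ≤ M)
    (a : ℕ → ℂ) (ha : Summable fun n : ℕ => ‖a n‖)
    (h : ∀ lam ∈ spectrum ℂ T, ‖lam‖ = 1 → (∑' m : ℕ, a m * lam ^ m) = 0) :
    Tendsto (fun n : ℕ => ‖T ^ n * (∑' m : ℕ, a m • T ^ m)‖) atTop (nhds 0) := by
  obtain ⟨M, hM⟩ := hT
  have hM0 : 0 ≤ M := (norm_nonneg _).trans (hM 0)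
  set Q : X →L[ℂ] X := ∑' m : ℕ, a m • T ^ m with hQ
  have hTs : HasSum (fun m => a m • T ^ m) Q := by
    refine Summable.hasSum (Summable.of_norm_bounded (ha.mul_right M) fun m => ?_)
    rw [norm_smul]
    exact mul_le_mul_of_nonneg_left (hM m) (norm_nonneg _)
  have hQT : ∀ m : ℕ, Commute Q (T ^ m) := by
    intro m
    have h1 := hTs.mul_right (T ^ m)
    have h2 := hTs.mul_left (T ^ m)
    refine h1.unique ?_
    convert h2 using 2 with j
    rw [smul_mul_assoc, mul_smul_comm, ← pow_add, ← pow_add, add_comm]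
  -- almost-norming vectors
  have hx : ∀ n : ℕ, ∃ x : X, ‖x‖ ≤ 1 ∧ ‖T ^ n * Q‖ ≤ 2 * ‖(T ^ n * Q) x‖ := by
    intro n
    by_cases h0 : ‖T ^ n * Q‖ = 0
    · exact ⟨0, by simp, by rw [h0]; positivity⟩
    · have hp : 0 < ‖T ^ n * Q‖ := lt_of_le_of_ne (norm_nonneg _) (Ne.symm h0)
      obtain ⟨x, hx1, hx2⟩ := (T ^ n * Q).exists_lt_apply_of_lt_opNorm (half_lt_self hp)
      exact ⟨x, hx1.le, by linarith⟩
  choose x hx1 hx2 using hx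
  have hTx : ∀ n m, ‖(T ^ m) (x n)‖ ≤ M := fun n m =>
    ((T ^ m).le_of_opNorm_le (hM m) _).trans (mul_le_of_le_one_right hM0 (hx1 n))
  let D := ktDiag T
  let Um := Unitary.linearIsometryEquiv.symm (ktShift X)
  let U : lp (fun _ : ℤ => X) 2 →L[ℂ] lp (fun _ : ℤ => X) 2 := Um
  have hUapp : ∀ f, U f = ktShift X f := fun f => rfl
  have hDM : ∀ m, ‖D ^ m‖ ≤ M := fun m => by
    rw [← ktDiag_pow]; exact (ktDiag_norm _).trans (hM m)
  have hDs : HasSum (fun m => a m • D ^ m) (∑' m, a m • D ^ m) := by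
    refine Summable.hasSum (Summable.of_norm_bounded (ha.mul_right M) fun m => ?_)
    rw [norm_smul]
    exact mul_le_mul_of_nonneg_left (hDM m) (norm_nonneg _)
  have hDQ : (∑' m, a m • D ^ m) = ktDiag Q := by
    ext f i
    have h1 := (hDs.mapL (ContinuousLinearMap.apply ℂ _ f)).mapL
      (lp.evalCLM ℂ (fun _ : ℤ => X) 2 i)
    have h2 := hTs.mapL (ContinuousLinearMap.apply ℂ X (f i))
    refine h1.unique ?_
    convert h2 using 2 with m
    · simp only [D, ← ktDiag_pow]
      rfl
    · rfl
  let η : ℕ → lp (fun _ : ℤ => X) 2 := fun n =>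
    ∑ m ∈ Finset.range (n + 1), lp.single 2 (m : ℤ) ((T ^ m) (x n))
  let c : ℕ → ℝ := fun n => 1 / Real.sqrt ((n : ℝ) + 1)
  have hc0 : ∀ n, 0 ≤ c n := fun n => by positivity
  have hc2 : ∀ n, c n ^ 2 * ((n : ℝ) + 1) = 1 := fun n => by
    simp only [c, div_pow, one_pow]
    rw [Real.sq_sqrt (by positivity)]
    field_simp
  have hc : Tendsto c atTop (𝓝 0) := by
    have h1 : Tendsto (fun n : ℕ => Real.sqrt ((n : ℝ) + 1)) atTop atTop :=
      Real.tendsto_sqrt_atTop.comp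
        (tendsto_atTop_add_const_right _ _ tendsto_natCast_atTop_atTop)
    simpa [c, Function.comp_def] using tendsto_inv_atTop_zero.comp h1
  let ξ : ℕ → lp (fun _ : ℤ => X) 2 := fun n => (c n : ℂ) • η n
  have hnc : ∀ n, ‖(c n : ℂ)‖ = c n := fun n => by
    rw [Complex.norm_real, Real.norm_of_nonneg (hc0 n)]
  have hξB : ∀ n, ‖ξ n‖ ≤ M := by
    intro n
    refine le_of_sq_le_sq ?_ hM0
    simp only [ξ]
    rw [norm_smul, hnc, mul_pow, kt_norm_sum]
    have h1 : ∑ m ∈ Finset.range (n + 1), ‖(T ^ m) (x n)‖ ^ 2 ≤ ((n : ℝ) + 1) * M ^ 2 := by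
      refine (Finset.sum_le_sum (g := fun _ => M ^ 2) fun m _ => ?_).trans ?_
      · exact pow_le_pow_left₀ (norm_nonneg _) (hTx n m) 2
      · simp
    calc _ ≤ c n ^ 2 * (((n : ℝ) + 1) * M ^ 2) := mul_le_mul_of_nonneg_left h1 (by positivity)
      _ = M ^ 2 := by rw [← mul_assoc, hc2, one_mul]
  have hξ0 : Tendsto (fun n => ‖(U - D) (ξ n)‖) atTop (𝓝 0) := by
    refine squeeze_zero (g := fun n => c n * (1 + M)) (fun _ => norm_nonneg _) (fun n => ?_)
      (by simpa using hc.mul_const (1 + M))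
    simp only [ξ]
    rw [map_smul, norm_smul, hnc]
    refine mul_le_mul_of_nonneg_left ?_ (hc0 n)
    have : (U - D) (η n) = lp.single 2 (-1 : ℤ) (x n) -
        lp.single 2 (((n + 1 : ℕ) : ℤ) - 1) ((T ^ (n + 1)) (x n)) := kt_shift_sub T (x n) (n + 1)
    rw [this]
    refine (norm_sub_le _ _).trans (add_le_add ?_ ?_)
    · rw [lp.norm_single (by simp)]; exact hx1 n
    · rw [lp.norm_single (by simp)]; exact hTx n _
  have main := kt_core2 U D Um.2 (by ext f i; rfl) M hDM a ha (fun z hz => by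
    by_cases hzs : z ∈ spectrum ℂ T
    · exact Or.inl (h z hzs hz)
    · right
      rw [spectrum.notMem_iff, Algebra.algebraMap_eq_smul_one] at hzs
      obtain ⟨R, hR⟩ := hzs.exists_left_inv
      refine ⟨ktDiag R, ?_⟩
      have e : z • 1 - D = ktDiag (z • 1 - T) := by ext f i; rfl
      rw [e, ← ktDiag_mul, hR, ktDiag_one]) ξ M hξB hξ0
  rw [hDQ] at main
  refine squeeze_zero (g := fun n => 2 * (M * ‖ktDiag Q (ξ n)‖)) (fun _ => norm_nonneg _)
    (fun n => ?_) (by simpa using (main.const_mul M).const_mul 2)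
  refine (hx2 n).trans (mul_le_mul_of_nonneg_left ?_ (by norm_num))
  refine le_of_sq_le_sq ?_ (by positivity)
  have e1 : ktDiag Q (ξ n) = (c n : ℂ) • ∑ m ∈ Finset.range (n + 1),
      (lp.single 2 (m : ℤ) (Q ((T ^ m) (x n))) : lp (fun _ : ℤ => X) 2) := by
    simp only [ξ, η, map_smul, map_sum, ktDiag_single]
  rw [mul_pow, e1, norm_smul, hnc, mul_pow, kt_norm_sum]
  set y := ‖(T ^ n * Q) (x n)‖ with hy
  have h1 : ((n : ℝ) + 1) * y ^ 2 ≤ M ^ 2 * ∑ m ∈ Finset.range (n + 1), ‖Q ((T ^ m) (x n))‖ ^ 2 := by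
    rw [Finset.mul_sum]
    refine le_trans (by simp) (Finset.sum_le_sum (f := fun _ => y ^ 2) fun m hm => ?_)
    rw [← mul_pow]
    refine pow_le_pow_left₀ (norm_nonneg _) ?_ 2
    have hmn : m ≤ n := Nat.lt_succ_iff.1 (Finset.mem_range.1 hm)
    have e2 : T ^ n * Q = T ^ (n - m) * (Q * T ^ m) := by
      rw [(hQT m).eq, ← mul_assoc, ← pow_add, Nat.sub_add_cancel hmn]
    rw [e2]
    exact (T ^ (n - m)).le_of_opNorm_le (hM _) _
  calc y ^ 2 = c n ^ 2 * (((n : ℝ) + 1) * y ^ 2) := by rw [← mul_assoc, hc2, one_mul]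
    _ ≤ c n ^ 2 * (M ^ 2 * ∑ m ∈ Finset.range (n + 1), ‖Q ((T ^ m) (x n))‖ ^ 2) :=
      mul_le_mul_of_nonneg_left h1 (by positivity)
    _ = _ := by ring
end

section
/- Let X be a complex Hilbert space, let T ∈ B(X) be a contraction (‖T‖ ≤ 1), let Λ := σ(T) ∩ 𝕋, and let a ∈ ℓ¹(ℕ). Then for every x ∈ X the (nonincreasing) sequence ‖Tⁿ â(T) x‖ satisfies limsup_{n→∞} ‖Tⁿ â(T) x‖ ≤ dist(a, K_Λ)·‖x‖. (ℤ₊-instance of Proposition 4.1 of the paper.) -/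
open Filter Topology

lemma fourier_uniq (b : ℤ → ℂ) (hb : Summable fun n : ℤ => ‖b n‖)
    (h : ∀ lam : ℂ, ‖lam‖ = 1 → (∑' n : ℤ, b n * lam ^ n) = 0) : b = 0 := by
  have : Fact (0 < (1:ℝ)) := ⟨one_pos⟩
  have hs : Summable fun n : ℤ => b n • (fourier n : C(AddCircle (1:ℝ), ℂ)) := by
    apply Summable.of_norm
    simpa only [norm_smul, fourier_norm, mul_one] using hb
  have h0 : (∑' n : ℤ, b n • (fourier n : C(AddCircle (1:ℝ), ℂ))) = 0 := by
    ext t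
    rw [← ContinuousMap.evalCLM_apply ℂ t, ContinuousLinearMap.map_tsum _ hs]
    have := h (fourier 1 t : ℂ) (by rw [fourier_apply]; exact Circle.norm_coe _)
    simpa [fourier_apply, ← Circle.coe_zpow, AddCircle.toCircle_zsmul] using this
  have hs0 : HasSum (fun n : ℤ => b n • (fourier n : C(AddCircle (1:ℝ), ℂ))) 0 := h0 ▸ hs.hasSum
  have hs1 := hs0.mapL (ContinuousMap.toLp (E := ℂ) 2 (AddCircle.haarAddCircle (T := (1:ℝ))) ℂ)
  funext k
  have hs2 := hs1.mapL (innerSL ℂ (fourierLp (T := (1:ℝ)) 2 k))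
  have ho := orthonormal_iff_ite.mp (orthonormal_fourier (T := (1:ℝ)))
  have hs3 : HasSum (fun n : ℤ => if n = k then b k else 0) (0 : ℂ) := by
    rw [map_zero, map_zero] at hs2
    refine (funext fun n => ?_ : (fun n : ℤ => if n = k then b k else 0) = _) ▸ hs2
    have h1 := ho k n
    rw [map_smul, map_smul, innerSL_apply_apply]
    change _ = b n • inner ℂ (fourierLp (T := (1:ℝ)) 2 k) (fourierLp (T := (1:ℝ)) 2 n)
    rw [h1]
    by_cases h : n = k
    · subst h; simp
    · simp [h, Ne.symm h]
  exact HasSum.unique (hasSum_ite_eq k (b k)) hs3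

lemma unitary_of_isom {A : Type*} [CStarAlgebra A] (V : A) (hV : star V * V = 1)
    (z : ℂ) (hz : ‖z‖ = 1) (hzV : z ∉ spectrum ℂ V) : V ∈ unitary A := by
  have h1 : IsUnit (algebraMap ℂ A z - V) := spectrum.notMem_iff.mp hzV
  have h2 := h1.star
  have hzz : star z * z = 1 := by
    rw [← starRingEnd_apply, Complex.conj_mul', hz]; simp
  have h3 : star (algebraMap ℂ A z - V) = - (algebraMap ℂ A (star z) * (star V * (algebraMap ℂ A z - V))) := by
    rw [star_sub, mul_sub, hV, ← Algebra.commutes z (star V), mul_sub, ← mul_assoc, ← map_mul, hzz,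
      algebraMap_star_comm]
    simp
  have hz0 : star z ≠ 0 := left_ne_zero_of_mul_eq_one hzz
  rw [h3, IsUnit.neg_iff] at h2
  have h4 : IsUnit (algebraMap ℂ A (star z)) := (IsUnit.mk0 _ hz0).map _
  have h5 := (h4.mul_left_iff).mp h2
  have h6 := (h1.mul_right_iff).mp h5
  refine Unitary.mem_iff.mpr ⟨hV, ?_⟩
  obtain ⟨w, hw⟩ := h6
  have : V = ↑w⁻¹ := by
    rw [← hw] at hV
    exact (Units.inv_eq_of_mul_eq_one_right hV).symm
  rw [← hw, this]; simp

lemma cfc_vanish {A : Type*} [CStarAlgebra A] (u : Aˣ) (hu : (u : A) ∈ unitary A)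
    (b : ℤ → ℂ) (hb : Summable fun n : ℤ => ‖b n‖)
    (h : ∀ lam ∈ spectrum ℂ (u : A), (∑' n : ℤ, b n * lam ^ n) = 0) :
    HasSum (fun n : ℤ => b n • ((u ^ n : Aˣ) : A)) 0 := by
  have hn : IsStarNormal (u : A) := ⟨by
    rw [Unitary.mem_iff] at hu
    show _ * _ = _ * _
    rw [hu.1, hu.2]⟩
  have hsp : ∀ lam ∈ spectrum ℂ (u : A), ‖lam‖ = 1 := fun lam hl => by
    simpa using spectrum.subset_circle_of_unitary hu hl
  have hF : ∀ F : Finset ℤ, ∑ n ∈ F, b n • ((u ^ n : Aˣ) : A)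
      = cfc (∑ n ∈ F, fun z : ℂ => b n * z ^ n) (u : A) := by
    intro F
    have hc : ∀ n : ℤ, ContinuousOn (fun z : ℂ => z ^ n) (spectrum ℂ (u : A)) := by
      intro n
      refine ContinuousOn.zpow₀ continuousOn_id _ fun z hz => Or.inl ?_
      have := hsp z hz
      rintro rfl
      simp at this
    rw [cfc_sum (fun n z => b n * z ^ n) _ _ (fun n _ => ContinuousOn.mul (f := fun _ => b n) (g := fun z => z ^ n) continuousOn_const (hc n))]
    refine Finset.sum_congr rfl fun n _ => ?_
    rw [cfc_const_mul _ _ _ (hc n), cfc_zpow u n hn]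
  show Tendsto _ _ _
  have ht : Tendsto (fun F : Finset ℤ => ∑' n : {n // n ∉ F}, ‖b n‖) atTop (𝓝 0) :=
    tendsto_tsum_compl_atTop_zero (fun n => ‖b n‖)
  refine squeeze_zero_norm (fun F => ?_) ht
  show ‖∑ n ∈ F, b n • ((u ^ n : Aˣ) : A)‖ ≤ _
  rw [hF F]
  refine norm_cfc_le (tsum_nonneg fun _ => norm_nonneg _) fun z hz => ?_
  have hnn : ∀ n : ℤ, ‖b n * z ^ n‖ = ‖b n‖ := fun n => by simp [hsp z hz]
  have hs : Summable fun n : ℤ => b n * z ^ n := Summable.of_norm (by simpa only [hnn] using hb)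
  have h1 := hs.sum_add_tsum_subtype_compl F
  rw [h z hz] at h1
  rw [Finset.sum_apply, eq_neg_of_add_eq_zero_left h1, norm_neg]
  refine (norm_tsum_le_tsum_norm ?_).trans (le_of_eq ?_)
  · simp only [hnn]
    exact hb.subtype (fun x => x ∉ F)
  · simp only [hnn]

section
variable {X : Type*} [NormedAddCommGroup X] [InnerProductSpace ℂ X]

lemma antitone_pow (T : X →L[ℂ] X) (hT : ‖T‖ ≤ 1) (x : X) :
    Antitone fun n : ℕ => ‖(T ^ n) x‖ := by
  refine antitone_nat_of_succ_le fun n => ?_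
  rw [pow_succ', mul_apply_eq_comp]
  exact T.le_of_opNorm_le hT _ |>.trans (by simp)

noncomputable def limNorm (T : X →L[ℂ] X) (x : X) : ℝ := ⨅ n : ℕ, ‖(T ^ n) x‖

lemma limNorm_tendsto (T : X →L[ℂ] X) (hT : ‖T‖ ≤ 1) (x : X) :
    Tendsto (fun n : ℕ => ‖(T ^ n) x‖) atTop (𝓝 (limNorm T x)) :=
  tendsto_atTop_ciInf (antitone_pow T hT x) ⟨0, by rintro _ ⟨n, rfl⟩; exact norm_nonneg _⟩

noncomputable def limInner (T : X →L[ℂ] X) (x y : X) : ℂ :=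
  ((limNorm T (x + y) : ℂ) ^ 2 - (limNorm T (x - y) : ℂ) ^ 2 +
              ((limNorm T (x - Complex.I • y) : ℂ) ^ 2 -
                (limNorm T (x + Complex.I • y) : ℂ) ^ 2) * Complex.I) / 4

lemma limInner_tendsto (T : X →L[ℂ] X) (hT : ‖T‖ ≤ 1) (x y : X) :
    Tendsto (fun n : ℕ => inner ℂ ((T ^ n) x) ((T ^ n) y)) atTop (𝓝 (limInner T x y)) := by
  have h : ∀ z : X, Tendsto (fun n : ℕ => ((‖(T ^ n) z‖ : ℝ) : ℂ) ^ 2) atTop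
      (𝓝 ((limNorm T z : ℂ) ^ 2)) := fun z =>
    ((Complex.continuous_ofReal.tendsto _).comp (limNorm_tendsto T hT z)).pow 2
  have h2 := (((h (x + y)).sub (h (x - y))).add
    (((h (x - Complex.I • y)).sub (h (x + Complex.I • y))).mul_const Complex.I)).div_const 4
  refine h2.congr fun n => ?_
  rw [inner_eq_sum_norm_sq_div_four (𝕜 := ℂ) ((T ^ n) x) ((T ^ n) y)]
  simp only [map_add, map_sub, map_smul, RCLike.I_to_complex]
  rfl

/-- `X` with the limit seminorm. -/
def LimSp (T : X →L[ℂ] X) (_ : ‖T‖ ≤ 1) : Type _ := X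

variable (T : X →L[ℂ] X) (hT : ‖T‖ ≤ 1)

instance : AddCommGroup (LimSp T hT) := inferInstanceAs (AddCommGroup X)
instance : Module ℂ (LimSp T hT) := inferInstanceAs (Module ℂ X)

noncomputable def toLimSp : X →ₗ[ℂ] LimSp T hT := LinearMap.id
noncomputable def ofLimSp : LimSp T hT →ₗ[ℂ] X := LinearMap.id

noncomputable abbrev limCore : PreInnerProductSpace.Core ℂ (LimSp T hT) where
  inner x y := limInner T (ofLimSp T hT x) (ofLimSp T hT y)
  conj_inner_symm x y := by
    refine tendsto_nhds_unique ((Complex.continuous_conj.tendsto _).comp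
      (limInner_tendsto T hT (ofLimSp T hT y) (ofLimSp T hT x))) ?_
    refine (limInner_tendsto T hT (ofLimSp T hT x) (ofLimSp T hT y)).congr fun n => ?_
    simp
  re_inner_nonneg x := by
    refine ge_of_tendsto' ((Complex.continuous_re.tendsto _).comp
      (limInner_tendsto T hT (ofLimSp T hT x) (ofLimSp T hT x))) fun n => ?_
    exact inner_self_nonneg (𝕜 := ℂ)
  add_left x y z := by
    refine tendsto_nhds_unique (limInner_tendsto T hT _ _) ?_
    refine ((limInner_tendsto T hT (ofLimSp T hT x) (ofLimSp T hT z)).add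
      (limInner_tendsto T hT (ofLimSp T hT y) (ofLimSp T hT z))).congr fun n => ?_
    rw [map_add, map_add, inner_add_left]
  smul_left x y r := by
    refine tendsto_nhds_unique (limInner_tendsto T hT _ _) ?_
    refine ((limInner_tendsto T hT (ofLimSp T hT x) (ofLimSp T hT y)).const_mul
      ((starRingEnd ℂ) r)).congr fun n => ?_
    rw [map_smul, map_smul, inner_smul_left]

noncomputable instance : SeminormedAddCommGroup (LimSp T hT) :=
  InnerProductSpace.Core.toSeminormedAddCommGroup (c := limCore T hT)
noncomputable instance : InnerProductSpace ℂ (LimSp T hT) :=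
  InnerProductSpace.ofCore (limCore T hT)

lemma limSp_norm (x : X) : ‖toLimSp T hT x‖ = limNorm T x := by
  have h0 : 0 ≤ limNorm T x := Real.iInf_nonneg fun _ => norm_nonneg _
  have h1 : ‖toLimSp T hT x‖ = √(limInner T x x).re := rfl
  have h2 : (limInner T x x).re = limNorm T x ^ 2 := by
    refine tendsto_nhds_unique ((Complex.continuous_re.tendsto _).comp
      (limInner_tendsto T hT x x)) ?_
    refine ((limNorm_tendsto T hT x).pow 2).congr fun n => ?_
    exact (inner_self_eq_norm_sq (𝕜 := ℂ) _).symm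
  rw [h1, h2, Real.sqrt_sq h0]

noncomputable def limMap : X →ₗ[ℂ] UniformSpace.Completion (LimSp T hT) :=
  (UniformSpace.Completion.toComplL (𝕜 := ℂ) (E := LimSp T hT)).toLinearMap ∘ₗ toLimSp T hT

lemma limMap_norm (x : X) : ‖limMap T hT x‖ = limNorm T x := by
  rw [← limSp_norm T hT]
  exact UniformSpace.Completion.norm_coe _

lemma limMap_dense : DenseRange (limMap T hT) :=
  UniformSpace.Completion.denseRange_coe (α := LimSp T hT)

end

section
variable {X : Type*} [NormedAddCommGroup X] [InnerProductSpace ℂ X] [CompleteSpace X]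
variable {Y : Type*} [NormedAddCommGroup Y] [InnerProductSpace ℂ Y] [CompleteSpace Y]

lemma core_bound (T : X →L[ℂ] X) (hT : ‖T‖ ≤ 1) (p : X →ₗ[ℂ] Y) (hd : DenseRange p)
    (hp : ∀ x, Tendsto (fun n : ℕ => ‖(T ^ n) x‖) atTop (𝓝 ‖p x‖))
    (a : ℕ → ℂ) (ha : Summable fun n : ℕ => ‖a n‖)
    (z : ℂ) (hz : ‖z‖ = 1) (hzT : z ∉ spectrum ℂ T)
    (b : ℤ → ℂ) (hb : Summable fun n : ℤ => ‖b n‖)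
    (hbT : ∀ lam ∈ spectrum ℂ T, ‖lam‖ = 1 → (∑' n : ℤ, b n * lam ^ n) = 0) (x : X) :
    ‖p ((∑' m : ℕ, a m • T ^ m) x)‖ ≤
      (∑' n : ℤ, ‖(if 0 ≤ n then a n.toNat else 0) - b n‖) * ‖x‖ := by
  have hple : ∀ x, ‖p x‖ ≤ 1 * ‖x‖ := fun x => by
    refine le_of_tendsto' (hp x) fun n => ?_
    simpa using antitone_pow T hT x (Nat.zero_le n)
  -- extension of operators commuting with `T`
  have hext : ∀ R : X →L[ℂ] X, Commute R T → ∃ S : Y →L[ℂ] Y, ∀ x, S (p x) = p (R x) := by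
    intro R hR
    refine ⟨(p ∘ₗ R.toLinearMap).extendOfNorm p, fun x => ?_⟩
    refine LinearMap.extendOfNorm_eq (f := p ∘ₗ R.toLinearMap) hd ⟨‖R‖, fun x => ?_⟩ x
    refine le_of_tendsto_of_tendsto' (hp (R x)) ((hp x).const_mul ‖R‖) fun n => ?_
    rw [← mul_apply_eq_comp, ← (hR.pow_right n).eq, mul_apply_eq_comp]
    exact R.le_opNorm _
  obtain ⟨V, hV⟩ := hext T (Commute.refl T)
  have hVn : ∀ y, ‖V y‖ = ‖y‖ := by
    refine fun y => hd.induction_on y (isClosed_eq (by fun_prop) (by fun_prop)) fun x => ?_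
    rw [hV]
    refine tendsto_nhds_unique (hp (T x)) ?_
    refine ((hp x).comp (tendsto_add_atTop_nat 1)).congr fun n => ?_
    simp [Function.comp, pow_succ]
  have hVV : star V * V = 1 := (ContinuousLinearMap.norm_map_iff_adjoint_comp_self V).mp hVn
  have hsp : ∀ lam : ℂ, lam ∉ spectrum ℂ T → lam ∉ spectrum ℂ V := by
    intro lam hl
    rw [spectrum.notMem_iff] at hl ⊢
    obtain ⟨u, hu⟩ := hl
    have hc : Commute (u : X →L[ℂ] X) T := by
      rw [hu]
      exact (Algebra.commute_algebraMap_left lam T).sub_left (Commute.refl T)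
    obtain ⟨S, hS⟩ := hext _ hc.units_inv_left
    have hlV : ∀ x, (algebraMap ℂ (Y →L[ℂ] Y) lam - V) (p x) = p ((u : X →L[ℂ] X) x) := by
      intro x
      rw [hu]
      simp [Algebra.algebraMap_eq_smul_one, hV]
    have e1 : (algebraMap ℂ (Y →L[ℂ] Y) lam - V) * S = 1 := by
      ext y
      refine hd.induction_on y (isClosed_eq (by fun_prop) (by fun_prop)) fun x => ?_
      rw [mul_apply_eq_comp, hS, hlV, ← mul_apply_eq_comp, Units.mul_inv]
      simp
    have e2 : S * (algebraMap ℂ (Y →L[ℂ] Y) lam - V) = 1 := by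
      ext y
      refine hd.induction_on y (isClosed_eq (by fun_prop) (by fun_prop)) fun x => ?_
      rw [mul_apply_eq_comp, hlV, hS, ← mul_apply_eq_comp, Units.inv_mul]
      simp
    exact ⟨⟨_, S, e1, e2⟩, rfl⟩
  have hVu : V ∈ unitary (Y →L[ℂ] Y) := unitary_of_isom V hVV z hz (hsp z hzT)
  let u : (Y →L[ℂ] Y)ˣ := ⟨V, star V, hVu.2, hVu.1⟩
  have hvan := cfc_vanish u hVu b hb (fun lam hl => hbT lam (by
      by_contra h; exact hsp lam h hl)
      (by simpa using spectrum.subset_circle_of_unitary hVu hl))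
  have huz : ∀ (n : ℤ) (y : Y), ‖((u ^ n : (Y →L[ℂ] Y)ˣ) : Y →L[ℂ] Y) y‖ = ‖y‖ := by
    have hnat : ∀ (n : ℕ) (y : Y), ‖((u ^ n : (Y →L[ℂ] Y)ˣ) : Y →L[ℂ] Y) y‖ = ‖y‖ := by
      intro n
      induction n with
      | zero => simp
      | succ k ih =>
        intro y
        rw [pow_succ, Units.val_mul, mul_apply_eq_comp, ih]
        exact hVn y
    intro n y
    obtain ⟨k, rfl | rfl⟩ := n.eq_nat_or_neg
    · rw [zpow_natCast]; exact hnat k y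
    · rw [zpow_neg, zpow_natCast, ← hnat k, ← mul_apply_eq_comp, Units.mul_inv]
      simp
  have hpow : ∀ (m : ℕ) (x : X), p ((T ^ m) x) = ((u ^ (m : ℤ) : (Y →L[ℂ] Y)ˣ) : Y →L[ℂ] Y) (p x) := by
    intro m
    induction m with
    | zero => simp
    | succ k ih =>
      intro x
      rw [pow_succ, mul_apply_eq_comp, ih, ← hV, Nat.cast_succ, zpow_add_one, Units.val_mul,
        mul_apply_eq_comp]
  have hTn : ∀ n, ‖T ^ n‖ ≤ 1 := fun n => ContinuousLinearMap.opNorm_le_bound _ zero_le_one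
    fun x => by simpa using antitone_pow T hT x (Nat.zero_le n)
  have hsT : Summable fun m : ℕ => a m • T ^ m := by
    refine Summable.of_norm_bounded ha fun n => ?_
    rw [norm_smul]
    exact mul_le_of_le_one_right (norm_nonneg _) (hTn n)
  let P : X →L[ℂ] Y := p.mkContinuous 1 hple
  have h1 : HasSum (fun m : ℕ => a m • ((u ^ (m : ℤ) : (Y →L[ℂ] Y)ˣ) : Y →L[ℂ] Y) (p x))
      (p ((∑' m : ℕ, a m • T ^ m) x)) := by
    have := (hsT.hasSum.mapL (ContinuousLinearMap.apply ℂ X x)).mapL P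
    refine (funext fun m => ?_ : (fun m : ℕ => a m •
      ((u ^ (m : ℤ) : (Y →L[ℂ] Y)ˣ) : Y →L[ℂ] Y) (p x)) = _) ▸ this
    rw [← hpow]
    simp [P]
  have h2 : HasSum (fun n : ℤ => (if 0 ≤ n then a n.toNat else 0) •
      ((u ^ n : (Y →L[ℂ] Y)ˣ) : Y →L[ℂ] Y) (p x)) (p ((∑' m : ℕ, a m • T ^ m) x)) := by
    refine (Function.Injective.hasSum_iff (Nat.cast_injective (R := ℤ)) ?_).mp ?_
    · intro n hn
      rw [if_neg, zero_smul]
      intro h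
      exact hn ⟨n.toNat, by simp [h]⟩
    · simpa [Function.comp_def] using h1
  have h3 := hvan.mapL (ContinuousLinearMap.apply ℂ Y (p x))
  have h4 := h2.sub h3
  have hsa : Summable fun n : ℤ => ‖(if 0 ≤ n then a n.toNat else 0 : ℂ)‖ := by
    refine (Function.Injective.summable_iff (Nat.cast_injective (R := ℤ)) ?_).mp ?_
    · intro n hn
      rw [if_neg, norm_zero]
      intro h
      exact hn ⟨n.toNat, by simp [h]⟩
    · simpa [Function.comp_def] using ha
  have hsab : Summable fun n : ℤ => ‖(if 0 ≤ n then a n.toNat else 0 : ℂ) - b n‖ :=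
    Summable.of_nonneg_of_le (fun _ => norm_nonneg _) (fun _ => norm_sub_le _ _) (hsa.add hb)
  have h5 := h4.norm_le_of_bounded (hsab.mul_right ‖p x‖).hasSum (fun n => by
    have : ((ContinuousLinearMap.apply ℂ Y (p x)) (b n • ((u ^ n : (Y →L[ℂ] Y)ˣ) : Y →L[ℂ] Y)))
      = b n • ((u ^ n : (Y →L[ℂ] Y)ˣ) : Y →L[ℂ] Y) (p x) := rfl
    rw [this, ← sub_smul, norm_smul, huz])
  rw [map_zero, sub_zero, tsum_mul_right] at h5
  refine h5.trans ?_
  have := hple x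
  rw [one_mul] at this
  exact mul_le_mul_of_nonneg_left this (tsum_nonneg fun _ => norm_nonneg _)

lemma trivial_bound (T : X →L[ℂ] X) (hT : ‖T‖ ≤ 1)
    (a : ℕ → ℂ) (ha : Summable fun n : ℕ => ‖a n‖) (x : X) :
    ‖(∑' m : ℕ, a m • T ^ m) x‖ ≤
      (∑' n : ℤ, ‖(if 0 ≤ n then a n.toNat else 0 : ℂ)‖) * ‖x‖ := by
  have hTn : ∀ n, ‖T ^ n‖ ≤ 1 := fun n => ContinuousLinearMap.opNorm_le_bound _ zero_le_one
    fun x => by simpa using antitone_pow T hT x (Nat.zero_le n)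
  have h1 : (∑' n : ℤ, ‖(if 0 ≤ n then a n.toNat else 0 : ℂ)‖) = ∑' n : ℕ, ‖a n‖ := by
    rw [← Function.Injective.tsum_eq (Nat.cast_injective (R := ℤ))]
    · simp
    · intro n hn
      by_cases h : 0 ≤ n
      · exact ⟨n.toNat, by simp [h]⟩
      · simp [h] at hn
  rw [h1]
  refine ContinuousLinearMap.le_of_opNorm_le _ ?_ x
  refine tsum_of_norm_bounded ha.hasSum fun n => ?_
  rw [norm_smul]
  exact mul_le_of_le_one_right (norm_nonneg _) (hTn n)

end

/-- ℤ₊-instance of Proposition 4.1: if `T` is a contraction on a complex Hilbert space,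
`Λ := σ(T) ∩ 𝕋` and `a ∈ ℓ¹(ℕ)`, then for every `x ∈ X`,
`limsup_n ‖Tⁿ â(T) x‖ ≤ dist(a, K_Λ)·‖x‖`, where `K_Λ` is the set of `b ∈ ℓ¹(ℤ)` whose
Fourier transform vanishes on `Λ` and `a` is viewed in `ℓ¹(ℤ)` by extension by zero. -/
theorem stmt_11 {X : Type*} [NormedAddCommGroup X] [InnerProductSpace ℂ X] [CompleteSpace X]
    (T : X →L[ℂ] X) (hT : ‖T‖ ≤ 1)
    (a : ℕ → ℂ) (ha : Summable fun n : ℕ => ‖a n‖) :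
    ∀ x : X,
      Filter.limsup (fun n : ℕ => ‖(T ^ n) ((∑' m : ℕ, a m • T ^ m) x)‖) atTop ≤
        sInf { r : ℝ | ∃ b : ℤ → ℂ, (Summable fun n : ℤ => ‖b n‖) ∧
            (∀ lam ∈ spectrum ℂ T, ‖lam‖ = 1 → (∑' n : ℤ, b n * lam ^ n) = 0) ∧
            r = ∑' n : ℤ, ‖(if 0 ≤ n then a n.toNat else 0) - b n‖ } * ‖x‖ := by
  intro x
  rw [(limNorm_tendsto T hT _).limsup_eq]
  have key : ∀ r ∈ { r : ℝ | ∃ b : ℤ → ℂ, (Summable fun n : ℤ => ‖b n‖) ∧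
            (∀ lam ∈ spectrum ℂ T, ‖lam‖ = 1 → (∑' n : ℤ, b n * lam ^ n) = 0) ∧
            r = ∑' n : ℤ, ‖(if 0 ≤ n then a n.toNat else 0) - b n‖ },
      limNorm T ((∑' m : ℕ, a m • T ^ m) x) ≤ r * ‖x‖ := by
    rintro r ⟨b, hb, hbT, rfl⟩
    by_cases hex : ∃ z : ℂ, ‖z‖ = 1 ∧ z ∉ spectrum ℂ T
    · obtain ⟨z, hz, hzT⟩ := hex
      rw [← limMap_norm T hT]
      refine core_bound T hT (limMap T hT) (limMap_dense T hT) (fun y => ?_) a ha z hz hzT b hb hbT x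
      rw [limMap_norm]
      exact limNorm_tendsto T hT y
    · push Not at hex
      have hb0 := fourier_uniq b hb fun lam hl => hbT lam (hex lam hl) hl
      subst hb0
      simp only [Pi.zero_apply, sub_zero]
      refine le_trans ?_ (trivial_bound T hT a ha x)
      refine le_of_tendsto' (limNorm_tendsto T hT _) fun n => ?_
      simpa using antitone_pow T hT ((∑' m : ℕ, a m • T ^ m) x) (Nat.zero_le n)
  rcases (norm_nonneg x).eq_or_lt with h0 | h0
  · have := key _ ⟨0, by simp, by simp, rfl⟩
    rw [← h0, mul_zero] at this ⊢
    exact this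
  · rw [← div_le_iff₀ h0]
    refine le_csInf ⟨_, 0, by simp, by simp, rfl⟩ fun r hr => ?_
    rw [div_le_iff₀ h0]
    exact key r hr
end

section
/- Let X be a complex Hilbert space, let T ∈ B(X) be a contraction (‖T‖ ≤ 1), let Λ := σ(T) ∩ 𝕋, and let a ∈ ℓ¹(ℕ). Then the (nonincreasing) sequence of operator norms ‖Tⁿ â(T)‖ satisfies limsup_{n→∞} ‖Tⁿ â(T)‖ ≤ dist(a, K_Λ). (ℤ₊-instance of Theorem 4.2 of the paper.) -/
open Filter Topology

lemma isoLem {H : Type*} [NormedAddCommGroup H] [InnerProductSpace ℂ H] [CompleteSpace H]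
    (V : H →L[ℂ] H) (hV : ∀ x, ‖V x‖ = ‖x‖) (μ : ℂ) (hμ : ‖μ‖ = 1) (hμs : μ ∉ spectrum ℂ V)
    (q : Polynomial ℂ) (M : ℝ) (hM0 : 0 ≤ M)
    (hM : ∀ z ∈ spectrum ℂ V, ‖z‖ = 1 → ‖q.eval z‖ ≤ M) : ‖Polynomial.aeval V q‖ ≤ M := by
  have h1 : star V * V = 1 := by
    rw [ContinuousLinearMap.star_eq_adjoint]
    exact (ContinuousLinearMap.norm_map_iff_adjoint_comp_self V).1 hV
  have hu : IsUnit (algebraMap ℂ (H →L[ℂ] H) μ - V) := by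
    simpa [spectrum.mem_iff] using hμs
  have hμμ : μ * star μ = 1 := by
    rw [Complex.star_def, Complex.mul_conj, Complex.normSq_eq_norm_sq, hμ]; simp
  have hsu : IsUnit (star V) := by
    have e : star V * (algebraMap ℂ (H →L[ℂ] H) μ - V)
        = -(μ • star (algebraMap ℂ (H →L[ℂ] H) μ - V)) := by
      simp only [Algebra.algebraMap_eq_smul_one, mul_sub, h1, star_sub, star_smul, star_one,
        smul_sub, smul_smul, hμμ]
      simp
    have hμ0 : μ ≠ 0 := by rintro rfl; simp at hμ
    have : IsUnit (star V * (algebraMap ℂ (H →L[ℂ] H) μ - V)) := by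
      rw [e, IsUnit.neg_iff]
      rw [Algebra.smul_def]
      exact ((IsUnit.mk0 μ hμ0).map _).mul hu.star
    obtain ⟨u, hu'⟩ := hu
    rw [← hu'] at this
    simpa using this
  have h2 : V * star V = 1 := by
    obtain ⟨u, hu'⟩ := hsu
    rw [← hu'] at h1 ⊢
    rw [Units.mul_eq_one_iff_inv_eq] at h1
    rw [← h1]; simp
  have hun : V ∈ unitary (H →L[ℂ] H) := ⟨h1, h2⟩
  have hn : IsStarNormal V := ⟨by rw [Commute, SemiconjBy, h1, h2]⟩
  rw [← cfc_polynomial q V]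
  apply norm_cfc_le hM0
  intro z hz
  exact hM z hz (by simpa using spectrum.subset_circle_of_unitary hun hz)

lemma complLem {E : Type*} [SeminormedAddCommGroup E] [InnerProductSpace ℂ E]
    (L : E →L[ℂ] E) (hL : ∀ x, ‖L x‖ = ‖x‖) (σ : Set ℂ)
    (hσ : ∀ z ∉ σ, ∃ R : E →L[ℂ] E, (∀ x, R (z • x - L x) = x) ∧ (∀ x, z • R x - L (R x) = x))
    (μ : ℂ) (hμ : ‖μ‖ = 1) (hμs : μ ∉ σ)
    (q : Polynomial ℂ) (M : ℝ) (hM0 : 0 ≤ M)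
    (hM : ∀ z ∈ σ, ‖z‖ = 1 → ‖q.eval z‖ ≤ M) (x : E) : 
    ‖Polynomial.aeval (L : E →ₗ[ℂ] E) q x‖ ≤ M * ‖x‖ := by
  let V := L.completion
  have hc : ∀ x : E, V x = ((L x : E) : UniformSpace.Completion E) := fun x => by
    simp [V]
  have hsp : ∀ z ∉ σ, z ∉ spectrum ℂ V := by
    intro z hz
    obtain ⟨R, h1, h2⟩ := hσ z hz
    rw [spectrum.mem_iff, not_not, isUnit_iff_exists]
    have hR : ∀ x : E, R.completion x = ((R x : E) : UniformSpace.Completion E) := fun x => by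
      simp
    refine ⟨R.completion, ?_, ?_⟩
    · ext y
      induction y using UniformSpace.Completion.induction_on with
      | hp => exact isClosed_eq (ContinuousLinearMap.continuous _) (ContinuousLinearMap.continuous _)
      | ih y =>
        simp only [mul_apply_eq_comp, sub_apply,
          Algebra.algebraMap_eq_smul_one, smul_apply, one_apply_eq_self, hR, hc]
        rw [← UniformSpace.Completion.coe_smul, ← UniformSpace.Completion.coe_sub, h2]
    · ext y
      induction y using UniformSpace.Completion.induction_on with
      | hp => exact isClosed_eq (ContinuousLinearMap.continuous _) (ContinuousLinearMap.continuous _)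
      | ih y =>
        simp only [mul_apply_eq_comp, sub_apply,
          Algebra.algebraMap_eq_smul_one, smul_apply, one_apply_eq_self, hR, hc]
        rw [← UniformSpace.Completion.coe_smul, ← UniformSpace.Completion.coe_sub, hR, h1]
  have hVn : ∀ y, ‖V y‖ = ‖y‖ := by
    intro y
    induction y using UniformSpace.Completion.induction_on with
    | hp => exact isClosed_eq (by fun_prop) (by fun_prop)
    | ih y => rw [hc, UniformSpace.Completion.norm_coe, UniformSpace.Completion.norm_coe, hL]
  have key := isoLem V hVn μ hμ (hsp μ hμs) q M hM0
    (fun z hz => hM z (by by_contra h; exact hsp z h hz))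
  have hq : Polynomial.aeval V q (x : UniformSpace.Completion E)
      = ((Polynomial.aeval (L : E →ₗ[ℂ] E) q x : E) : UniformSpace.Completion E) := by
    have hp : ∀ n : ℕ, ∀ x : E, (V ^ n) (x : UniformSpace.Completion E) = (((L : E →ₗ[ℂ] E) ^ n) x : E) := by
      intro n
      induction n with
      | zero => intro x; simp
      | succ n ih => intro x; simp [pow_succ, hc, ih]
    have hall : ∀ p : Polynomial ℂ, Polynomial.aeval V p (x : UniformSpace.Completion E)
      = ((Polynomial.aeval (L : E →ₗ[ℂ] E) p x : E) : UniformSpace.Completion E) := by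
      intro p
      induction p using Polynomial.induction_on' with
      | add p q hp hq =>
        simp only [map_add, add_apply, LinearMap.add_apply, hp, hq]
        rw [UniformSpace.Completion.coe_add]
      | monomial n a =>
        simp only [Polynomial.aeval_monomial, Algebra.algebraMap_eq_smul_one, smul_mul_assoc,
          one_mul, smul_apply, LinearMap.smul_apply, hp]
        rw [UniformSpace.Completion.coe_smul]
    exact hall q
  calc _ = ‖Polynomial.aeval V q (x : UniformSpace.Completion E)‖ := by
        rw [hq, UniformSpace.Completion.norm_coe]
    _ ≤ _ := by
      refine (ContinuousLinearMap.le_opNorm _ _).trans ?_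
      rw [UniformSpace.Completion.norm_coe]
      gcongr

section construction

variable {X : Type*} [NormedAddCommGroup X] [InnerProductSpace ℂ X]

/-- bounded sequences -/
def bddSub (X : Type*) [NormedAddCommGroup X] [InnerProductSpace ℂ X] :
    Submodule ℂ (ℕ → X) where
  carrier := {x | ∃ C : ℝ, ∀ n, ‖x n‖ ≤ C}
  add_mem' := by
    rintro x y ⟨C, hC⟩ ⟨D, hD⟩
    exact ⟨C + D, fun n => (norm_add_le _ _).trans (add_le_add (hC n) (hD n))⟩
  zero_mem' := ⟨0, fun n => by simp⟩
  smul_mem' := by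
    rintro c x ⟨C, hC⟩
    exact ⟨‖c‖ * C, fun n => by
      rw [Pi.smul_apply, norm_smul]; exact mul_le_mul_of_nonneg_left (hC n) (norm_nonneg _)⟩

/-- the type of bounded sequences, without topology -/
def BSeq (X : Type*) [NormedAddCommGroup X] [InnerProductSpace ℂ X] : Type _ := bddSub X

noncomputable instance : AddCommGroup (BSeq X) := inferInstanceAs (AddCommGroup (bddSub X))
noncomputable instance : Module ℂ (BSeq X) := inferInstanceAs (Module ℂ (bddSub X))

/-- the underlying sequence -/
def BSeq.seq (x : BSeq X) : ℕ → X := x.1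

lemma BSeq.ext' {x y : BSeq X} (h : ∀ n, x.seq n = y.seq n) : x = y :=
  Subtype.ext (funext h)

@[simp] lemma BSeq.seq_add (x y : BSeq X) (n : ℕ) : (x + y).seq n = x.seq n + y.seq n := rfl
@[simp] lemma BSeq.seq_sub (x y : BSeq X) (n : ℕ) : (x - y).seq n = x.seq n - y.seq n := rfl
@[simp] lemma BSeq.seq_smul (c : ℂ) (y : BSeq X) (n : ℕ) : (c • y).seq n = c • y.seq n := rfl

lemma BSeq.bdd (x : BSeq X) : ∃ C : ℝ, 0 ≤ C ∧ ∀ n, ‖x.seq n‖ ≤ C := by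
  obtain ⟨C, hC⟩ := x.2
  exact ⟨C, (norm_nonneg _).trans (hC 0), hC⟩

/-- pointwise action -/
def mapB (R : X →L[ℂ] X) : BSeq X →ₗ[ℂ] BSeq X where
  toFun x := ⟨fun n => R (x.seq n), by
    obtain ⟨C, h0, hC⟩ := x.bdd
    exact ⟨‖R‖ * C, fun n => (R.le_opNorm _).trans
      (mul_le_mul_of_nonneg_left (hC n) (norm_nonneg _))⟩⟩
  map_add' x y := BSeq.ext' fun n => R.map_add _ _
  map_smul' c x := BSeq.ext' fun n => R.map_smul _ _

@[simp] lemma mapB_seq (R : X →L[ℂ] X) (x : BSeq X) (n : ℕ) : (mapB R x).seq n = R (x.seq n) := rfl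

lemma mapB_aeval (T : X →L[ℂ] X) (p : Polynomial ℂ) (x : BSeq X) (n : ℕ) :
    (Polynomial.aeval (mapB T) p x).seq n = Polynomial.aeval T p (x.seq n) := by
  have hp : ∀ k : ℕ, ∀ x : BSeq X, (((mapB T) ^ k) x).seq n = (T ^ k) (x.seq n) := by
    intro k
    induction k with
    | zero => intro x; simp
    | succ k ih => intro x; simp [pow_succ, ih]
  induction p using Polynomial.induction_on' with
  | add p q hp hq =>
    simp only [map_add, add_apply, LinearMap.add_apply, hp, hq, BSeq.seq_add]
  | monomial n a =>
    simp only [Polynomial.aeval_monomial, Algebra.algebraMap_eq_smul_one, smul_mul_assoc,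
      one_mul, smul_apply, LinearMap.smul_apply, hp, BSeq.seq_smul]

/-- averaged inner products -/
noncomputable def av (T : X →L[ℂ] X) (x y : BSeq X) (n : ℕ) : ℂ :=
  ((n : ℂ) + 1)⁻¹ * ∑ k ∈ Finset.range (n + 1), inner ℂ ((T ^ k) (x.seq n)) ((T ^ k) (y.seq n))

/-- averaged squared norm -/
noncomputable def avn (T : X →L[ℂ] X) (x : BSeq X) (n : ℕ) : ℝ :=
  ((n : ℝ) + 1)⁻¹ * ∑ k ∈ Finset.range (n + 1), ‖(T ^ k) (x.seq n)‖ ^ 2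

/-- limit inner product -/
noncomputable def ip (T : X →L[ℂ] X) (x y : BSeq X) : ℂ :=
  limUnder (hyperfilter ℕ : Filter ℕ) (av T x y)

lemma av_self (T : X →L[ℂ] X) (x : BSeq X) (n : ℕ) : av T x x n = (avn T x n : ℂ) := by
  simp only [av, avn, inner_self_eq_norm_sq_to_K]
  push_cast
  rfl

lemma pow_le (T : X →L[ℂ] X) (hT : ‖T‖ ≤ 1) (k : ℕ) (v : X) : ‖(T ^ k) v‖ ≤ ‖v‖ := by
  have h : ‖T ^ k‖ ≤ 1 := by
    cases k with
    | zero => exact ContinuousLinearMap.norm_id_le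
    | succ k => exact (norm_pow_le' T (Nat.succ_pos k)).trans (pow_le_one₀ (norm_nonneg _) hT)
  exact ((T ^ k).le_opNorm v).trans (mul_le_of_le_one_left (norm_nonneg _) h)

lemma ip_tendsto (T : X →L[ℂ] X) (hT : ‖T‖ ≤ 1) (x y : BSeq X) :
    Tendsto (av T x y) (hyperfilter ℕ : Filter ℕ) (𝓝 (ip T x y)) := by
  obtain ⟨C, hC0, hC⟩ := x.bdd
  obtain ⟨D, hD0, hD⟩ := y.bdd
  have hb : ∀ n, av T x y n ∈ Metric.closedBall (0 : ℂ) (C * D) := by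
    intro n
    rw [mem_closedBall_zero_iff, av, norm_mul, norm_inv]
    have e : ‖(n : ℂ) + 1‖ = n + 1 := by
      have : ((n : ℂ) + 1) = ((n + 1 : ℕ) : ℂ) := by push_cast; rfl
      rw [this, Complex.norm_natCast]; push_cast; rfl
    rw [e, inv_mul_le_iff₀ (by positivity)]
    refine (norm_sum_le _ _).trans ?_
    have : ∀ k ∈ Finset.range (n + 1),
        ‖inner ℂ ((T ^ k) (x.seq n)) ((T ^ k) (y.seq n))‖ ≤ C * D := fun k _ =>
      (norm_inner_le_norm _ _).trans (mul_le_mul ((pow_le T hT k _).trans (hC n))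
        ((pow_le T hT k _).trans (hD n)) (norm_nonneg _) hC0)
    refine (Finset.sum_le_card_nsmul _ _ _ this).trans ?_
    simp
  have hc : IsCompact (Metric.closedBall (0 : ℂ) (C * D)) := isCompact_closedBall _ _
  obtain ⟨l, -, hl⟩ := hc.ultrafilter_le_nhds ((hyperfilter ℕ).map (av T x y))
    (le_principal_iff.2 (by
      rw [Ultrafilter.coe_map]
      exact Filter.mem_map.2 (Filter.univ_mem' hb)))
  exact tendsto_nhds_limUnder ⟨l, hl⟩

lemma ip_self_tendsto (T : X →L[ℂ] X) (hT : ‖T‖ ≤ 1) (x : BSeq X) :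
    Tendsto (avn T x) (hyperfilter ℕ : Filter ℕ) (𝓝 (ip T x x).re) := by
  have := (Complex.continuous_re.tendsto _).comp (ip_tendsto T hT x x)
  refine this.congr fun n => ?_
  simp [av_self]

/-- the pre-inner product -/
@[reducible]
noncomputable def coreB (T : X →L[ℂ] X) (hT : ‖T‖ ≤ 1) : PreInnerProductSpace.Core ℂ (BSeq X) where
  inner := ip T
  conj_inner_symm x y := by
    have := (Complex.continuous_conj.tendsto _).comp (ip_tendsto T hT y x)
    refine tendsto_nhds_unique this ((ip_tendsto T hT x y).congr fun n => ?_)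
    simp [av, inner_conj_symm]
  re_inner_nonneg x := by
    refine ge_of_tendsto' (ip_self_tendsto T hT x) fun n => ?_
    rw [avn]; positivity
  add_left x y z := by
    refine tendsto_nhds_unique (ip_tendsto T hT _ _)
      (((ip_tendsto T hT x z).add (ip_tendsto T hT y z)).congr fun n => ?_)
    simp [av, inner_add_left, Finset.sum_add_distrib, mul_add]
  smul_left x y r := by
    refine tendsto_nhds_unique (ip_tendsto T hT _ _)
      (((ip_tendsto T hT x y).const_mul _).congr fun n => ?_)
    simp only [av, BSeq.seq_smul, map_smul, inner_smul_left, ← Finset.mul_sum]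
    ring

lemma ip_T (T : X →L[ℂ] X) (hT : ‖T‖ ≤ 1) (x : BSeq X) :
    (ip T (mapB T x) (mapB T x)).re = (ip T x x).re := by
  refine tendsto_nhds_unique (ip_self_tendsto T hT _) ?_
  have h0 : Tendsto (fun n : ℕ => ((n : ℝ) + 1)⁻¹ *
      (‖(T ^ (n + 1)) (x.seq n)‖ ^ 2 - ‖x.seq n‖ ^ 2)) (hyperfilter ℕ : Filter ℕ) (𝓝 0) := by
    obtain ⟨C, hC0, hC⟩ := x.bdd
    have h1 : Tendsto (fun n : ℕ => ((n : ℝ) + 1)⁻¹) atTop (𝓝 0) := by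
      simpa using tendsto_one_div_add_atTop_nhds_zero_nat (𝕜 := ℝ)
    have hle : (hyperfilter ℕ : Filter ℕ) ≤ atTop := Nat.hyperfilter_le_atTop
    refine Tendsto.mono_left ?_ hle
    refine h1.zero_mul_isBoundedUnder_le ⟨C ^ 2, ?_⟩
    rw [eventually_map]
    refine Filter.Eventually.of_forall fun n => ?_
    have a1 := pow_le T hT (n + 1) (x.seq n)
    have a2 := hC n
    have b1 : ‖(T ^ (n + 1)) (x.seq n)‖ ^ 2 ≤ C ^ 2 := by gcongr; exact a1.trans a2
    have b2 : ‖x.seq n‖ ^ 2 ≤ C ^ 2 := by gcongr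
    simp only [Function.comp, Real.norm_eq_abs]
    rw [abs_le]
    constructor <;> nlinarith [sq_nonneg ‖(T ^ (n + 1)) (x.seq n)‖, sq_nonneg ‖x.seq n‖]
  have := (ip_self_tendsto T hT x).add h0
  rw [add_zero] at this
  refine this.congr fun n => ?_
  simp only [avn, mapB_seq, ← mul_add]
  congr 1
  have e : ∀ k, (T ^ k) (T (x.seq n)) = (T ^ (k + 1)) (x.seq n) := fun k => by
    rw [pow_succ]; rfl
  simp only [e]
  have := Finset.sum_range_sub (fun k => ‖(T ^ k) (x.seq n)‖ ^ 2) (n + 1)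
  rw [Finset.sum_sub_distrib] at this
  simp only [pow_zero, one_apply_eq_self] at this
  linarith

lemma ip_comm (T : X →L[ℂ] X) (hT : ‖T‖ ≤ 1) (R : X →L[ℂ] X) (hR : Commute R T) (x : BSeq X) :
    (ip T (mapB R x) (mapB R x)).re ≤ ‖R‖ ^ 2 * (ip T x x).re := by
  refine le_of_tendsto_of_tendsto' (ip_self_tendsto T hT _)
    ((ip_self_tendsto T hT x).const_mul _) fun n => ?_
  simp only [avn, mapB_seq]
  rw [mul_left_comm]
  refine mul_le_mul_of_nonneg_left ?_ (by positivity)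
  rw [Finset.mul_sum]
  refine Finset.sum_le_sum fun k hk => ?_
  have e : (T ^ k) (R (x.seq n)) = R ((T ^ k) (x.seq n)) := by
    have := (hR.pow_right k).eq
    exact (congrArg (fun S => S (x.seq n)) this).symm
  rw [e, ← mul_pow]
  gcongr
  exact R.le_opNorm _

lemma polyLem [CompleteSpace X] (T : X →L[ℂ] X) (hT : ‖T‖ ≤ 1)
    (μ : ℂ) (hμ : ‖μ‖ = 1) (hμs : μ ∉ spectrum ℂ T)
    (q : Polynomial ℂ) (M : ℝ) (hM0 : 0 ≤ M)
    (hM : ∀ z ∈ spectrum ℂ T, ‖z‖ = 1 → ‖q.eval z‖ ≤ M) (c : ℝ)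
    (hc : ∀ n : ℕ, c ≤ ‖T ^ n * Polynomial.aeval T q‖) : c ≤ M := by
  by_contra! hlt
  obtain ⟨d, hd1, hd2⟩ := exists_between hlt
  have hex : ∀ n : ℕ, ∃ v : X, ‖v‖ ≤ 1 ∧ d ≤ ‖(T ^ n) (Polynomial.aeval T q v)‖ := by
    intro n
    obtain ⟨v, h1, h2⟩ := ContinuousLinearMap.exists_lt_apply_of_lt_opNorm
      (T ^ n * Polynomial.aeval T q) (hd2.trans_le (hc n))
    exact ⟨v, h1.le, h2.le⟩
  choose v hv1 hv2 using hex
  let x : BSeq X := ⟨v, 1, hv1⟩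
  have hxs : ∀ n, x.seq n = v n := fun n => rfl
  let core := coreB T hT
  let : SeminormedAddCommGroup (BSeq X) :=
    InnerProductSpace.Core.toSeminormedAddCommGroup (𝕜 := ℂ)
  let : InnerProductSpace ℂ (BSeq X) := InnerProductSpace.ofCore core
  have hnorm : ∀ y : BSeq X, ‖y‖ = √(ip T y y).re := fun y => rfl
  have hRb : ∀ R : X →L[ℂ] X, Commute R T → ∀ y, ‖mapB R y‖ ≤ ‖R‖ * ‖y‖ := by
    intro R hR y
    rw [hnorm, hnorm]
    refine (Real.sqrt_le_sqrt (ip_comm T hT R hR y)).trans ?_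
    rw [Real.sqrt_mul (by positivity), Real.sqrt_sq (norm_nonneg _)]
  have hmk : ∀ R : X →L[ℂ] X, Commute R T → ∃ R' : BSeq X →L[ℂ] BSeq X, 
      (R' : BSeq X →ₗ[ℂ] BSeq X) = mapB R := fun R hR =>
    ⟨(mapB R).mkContinuous ‖R‖ (hRb R hR), rfl⟩
  obtain ⟨L, hL⟩ := hmk T (Commute.refl T)
  have hLa : ∀ y, L y = mapB T y := fun y => by rw [← hL]; rfl
  have key := complLem L (fun y => by rw [hLa, hnorm, hnorm, ip_T T hT]) (spectrum ℂ T) ?_ μ hμ hμs q M hM0 hM x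
  · rw [hL] at key
    have h1 : ‖x‖ ≤ 1 := by
      rw [hnorm]
      refine Real.sqrt_le_iff.2 ⟨zero_le_one, ?_⟩
      rw [one_pow]
      refine le_of_tendsto' (ip_self_tendsto T hT x) fun n => ?_
      rw [avn, inv_mul_le_iff₀ (by positivity)]
      refine (Finset.sum_le_card_nsmul _ _ 1 fun k _ => ?_).trans (by simp)
      exact pow_le_one₀ (norm_nonneg _) ((pow_le T hT k _).trans (hv1 n))
    have h2 : d ≤ ‖Polynomial.aeval (mapB T) q x‖ := by
      rw [hnorm]
      refine Real.le_sqrt_of_sq_le ?_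
      refine ge_of_tendsto' (ip_self_tendsto T hT _) fun n => ?_
      rw [avn, le_inv_mul_iff₀ (by positivity)]
      have : ∀ k ∈ Finset.range (n + 1),
          d ^ 2 ≤ ‖(T ^ k) ((Polynomial.aeval (mapB T) q x).seq n)‖ ^ 2 := by
        intro k hk
        have hk' : k ≤ n := Nat.lt_succ_iff.1 (Finset.mem_range.1 hk)
        have hd0 : 0 ≤ d := hM0.trans hd1.le
        gcongr
        rw [mapB_aeval, hxs]
        refine (hv2 n).trans ?_
        have e : T ^ n = T ^ (n - k) * T ^ k := by rw [← pow_add]; congr 1; omega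
        rw [e]
        exact pow_le T hT _ _
      refine le_trans ?_ (Finset.card_nsmul_le_sum _ _ _ this)
      simp
    have := mul_le_of_le_one_right hM0 h1
    linarith
  · intro z hz
    rw [spectrum.mem_iff, not_not, isUnit_iff_exists] at hz
    obtain ⟨R, hR1, hR2⟩ := hz
    have hRc : Commute R T := by
      have h3 : R * T = z • R - 1 := by
        rw [← hR2]; simp [mul_sub, Algebra.algebraMap_eq_smul_one]
      have h4 : T * R = z • R - 1 := by
        rw [← hR1]; simp [sub_mul, Algebra.algebraMap_eq_smul_one]
      exact h3.trans h4.symm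
    obtain ⟨R', hR'⟩ := hmk R hRc
    have hRa : ∀ y, R' y = mapB R y := fun y => by rw [← hR']; rfl
    refine ⟨R', fun y => ?_, fun y => ?_⟩
    · rw [hRa, hLa]
      refine BSeq.ext' fun n => ?_
      have := congrArg (fun S => S (y.seq n)) hR2
      simpa [Algebra.algebraMap_eq_smul_one] using this
    · rw [hRa, hLa]
      refine BSeq.ext' fun n => ?_
      have := congrArg (fun S => S (y.seq n)) hR1
      simpa [Algebra.algebraMap_eq_smul_one] using this

end construction

lemma fourierUniq (b : ℤ → ℂ) (hb : Summable fun n => ‖b n‖)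
    (h : ∀ z : ℂ, ‖z‖ = 1 → ∑' n : ℤ, b n * z ^ n = 0) : b = 0 := by
  haveI : Fact ((0 : ℝ) < 1) := ⟨one_pos⟩
  let F : ℤ → C(AddCircle (1 : ℝ), ℂ) := fun n => b n • fourier n
  have hF : Summable F := by
    refine Summable.of_norm (hb.congr fun n => ?_)
    simp only [F, norm_smul, fourier_norm, mul_one]
  have h0 : HasSum F 0 := by
    have h1 : ∑' n, F n = 0 := by
      ext t
      have h2 : HasSum (fun n => F n t) ((∑' n, F n) t) :=
        ContinuousMap.hasSum_apply hF.hasSum t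
      rw [← h2.tsum_eq]
      rw [ContinuousMap.zero_apply, ← h (AddCircle.toCircle t : ℂ) (Circle.norm_coe _)]
      refine tsum_congr fun n => ?_
      simp [F, AddCircle.toCircle_zsmul]
    rw [← h1]; exact hF.hasSum
  have h3 := h0.map (ContinuousMap.toLp (E := ℂ) 2 AddCircle.haarAddCircle ℂ)
    (ContinuousLinearMap.continuous _)
  have ho := @orthonormal_fourier (1 : ℝ) _
  funext m
  have h4 := h3.mapL (innerSL ℂ (fourierLp 2 m))
  have h5 : ∀ n, (innerSL ℂ (@fourierLp (1 : ℝ) _ 2 _ m)) (((ContinuousMap.toLp (E := ℂ) 2 AddCircle.haarAddCircle ℂ) ∘ F) n)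
      = if n = m then b m else 0 := by
    intro n
    have : ((ContinuousMap.toLp (E := ℂ) 2 AddCircle.haarAddCircle ℂ) ∘ F) n = b n • fourierLp 2 n := by
      simp [F, fourierLp]
    rw [this, map_smul, innerSL_apply_apply, orthonormal_iff_ite.1 ho]
    by_cases hnm : n = m
    · subst hnm; simp
    · simp [hnm, Ne.symm hnm]
  simp only [h5] at h4
  simpa using (hasSum_ite_eq m (b m)).unique h4

lemma tailLem {A : Type*} [NormedRing A] [NormedAlgebra ℂ A] [CompleteSpace A] (w : A)
    (hw : ∀ k : ℕ, ‖w ^ k‖ ≤ 1) (a : ℕ → ℂ) (ha : Summable fun n : ℕ => ‖a n‖) (N : ℕ) :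
    ‖(∑' m, a m • w ^ m) - ∑ m ∈ Finset.range N, a m • w ^ m‖ ≤ ∑' k, ‖a (k + N)‖ := by
  have hle : ∀ m, ‖a m • w ^ m‖ ≤ ‖a m‖ := fun m => by
    rw [norm_smul]; exact mul_le_of_le_one_right (norm_nonneg _) (hw m)
  have hs : Summable fun m => a m • w ^ m := Summable.of_norm_bounded ha hle
  rw [← hs.sum_add_tsum_nat_add N, add_sub_cancel_left]
  exact tsum_of_norm_bounded ((summable_nat_add_iff N).2 ha).hasSum fun k => hle _

/-- ℤ₊-instance of Theorem 4.2: if `T` is a contraction on a complex Hilbert space,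
`Λ := σ(T) ∩ 𝕋` and `a ∈ ℓ¹(ℕ)`, then `limsup_n ‖Tⁿ â(T)‖ ≤ dist(a, K_Λ)`, where `K_Λ`
is the set of `b ∈ ℓ¹(ℤ)` whose Fourier transform vanishes on `Λ` and `a` is viewed in
`ℓ¹(ℤ)` by extension by zero. -/
theorem stmt_12 {X : Type*} [NormedAddCommGroup X] [InnerProductSpace ℂ X] [CompleteSpace X]
    (T : X →L[ℂ] X) (hT : ‖T‖ ≤ 1)
    (a : ℕ → ℂ) (ha : Summable fun n : ℕ => ‖a n‖) :
    Filter.limsup (fun n : ℕ => ‖T ^ n * (∑' m : ℕ, a m • T ^ m)‖) atTop ≤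
      sInf { r : ℝ | ∃ b : ℤ → ℂ, (Summable fun n : ℤ => ‖b n‖) ∧
          (∀ lam ∈ spectrum ℂ T, ‖lam‖ = 1 → (∑' n : ℤ, b n * lam ^ n) = 0) ∧
          r = ∑' n : ℤ, ‖(if 0 ≤ n then a n.toNat else 0) - b n‖ } := by
  have hTk : ∀ k : ℕ, ‖T ^ k‖ ≤ 1 := fun k =>
    ContinuousLinearMap.opNorm_le_bound _ zero_le_one fun v => by
      rw [one_mul]; exact pow_le T hT k v
  set S := ∑' m : ℕ, a m • T ^ m with hS
  set u : ℕ → ℝ := fun n => ‖T ^ n * S‖ with hu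
  have hanti : Antitone u := antitone_nat_of_succ_le fun n => by
    simp only [hu, pow_succ', mul_assoc]
    exact (norm_mul_le _ _).trans (mul_le_of_le_one_left (norm_nonneg _) hT)
  have hbdd : BddBelow (Set.range u) := ⟨0, by rintro _ ⟨n, rfl⟩; exact norm_nonneg _⟩
  rw [(tendsto_atTop_ciInf hanti hbdd).limsup_eq]
  have hcu : ∀ n, (⨅ i, u i) ≤ u n := fun n => ciInf_le hbdd n
  set c := ⨅ i, u i
  let A : ℤ → ℂ := fun n => if 0 ≤ n then a n.toNat else 0
  have hAcast : ∀ n : ℕ, A n = a n := fun n => by simp [A]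
  have hAoff : ∀ n : ℤ, n ∉ Set.range (Nat.cast : ℕ → ℤ) → A n = 0 := fun n hn => by
    simp only [A]
    rw [if_neg]
    intro h
    exact hn ⟨n.toNat, by simp [h]⟩
  have hAs : Summable fun n => ‖A n‖ := by
    refine (Function.Injective.summable_iff Nat.cast_injective (fun n hn => ?_)).1 (?_ : Summable ((fun n => ‖A n‖) ∘ (Nat.cast : ℕ → ℤ)))
    · rw [hAoff n hn, norm_zero]
    · simpa [Function.comp_def, hAcast] using ha
  apply le_csInf
  · exact ⟨_, 0, by simpa using summable_zero, by simp, rfl⟩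
  rintro r ⟨b, hb, hz, rfl⟩
  change c ≤ ∑' n : ℤ, ‖A n - b n‖
  have hDs : Summable fun n => ‖A n - b n‖ :=
    Summable.of_nonneg_of_le (fun _ => norm_nonneg _) (fun n => norm_sub_le _ _) (hAs.add hb)
  have hD0 : 0 ≤ ∑' n : ℤ, ‖A n - b n‖ := tsum_nonneg fun _ => norm_nonneg _
  by_cases hex : ∃ μ : ℂ, ‖μ‖ = 1 ∧ μ ∉ spectrum ℂ T
  · obtain ⟨μ, hμ, hμs⟩ := hex
    have key : ∀ N : ℕ, c ≤ (∑' n : ℤ, ‖A n - b n‖) + 2 * ∑' k, ‖a (k + N)‖ := by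
      intro N
      have ht0 : 0 ≤ ∑' k, ‖a (k + N)‖ := tsum_nonneg fun _ => norm_nonneg _
      let q : Polynomial ℂ := ∑ m ∈ Finset.range N, Polynomial.monomial m (a m)
      have := polyLem T hT μ hμ hμs q ((∑' n : ℤ, ‖A n - b n‖) + ∑' k, ‖a (k + N)‖)
        (by positivity) ?_ (c - ∑' k, ‖a (k + N)‖) ?_
      · linarith
      · intro z hzs hz1
        have h1 := tailLem z (fun k => by rw [norm_pow, hz1, one_pow]) a ha N
        have h2 : q.eval z = ∑ m ∈ Finset.range N, a m • z ^ m := by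
          simp [q, Polynomial.eval_finsetSum]
        have hz0 : ∀ n : ℤ, ‖z ^ n‖ = 1 := fun n => by rw [norm_zpow, hz1, one_zpow]
        have h3 : ∑' m : ℕ, a m • z ^ m = ∑' n : ℤ, A n * z ^ n := by
          rw [← Function.Injective.tsum_eq (Nat.cast_injective (R := ℤ))]
          · simp [hAcast]
          · intro n hn
            by_contra h
            exact hn (by simp [hAoff n h])
        have h4 : ‖∑' m : ℕ, a m • z ^ m‖ ≤ ∑' n : ℤ, ‖A n - b n‖ := by
          have s1 : Summable fun n : ℤ => A n * z ^ n :=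
            Summable.of_norm (hAs.congr fun n => by rw [norm_mul, hz0, mul_one])
          have s2 : Summable fun n : ℤ => b n * z ^ n :=
            Summable.of_norm (hb.congr fun n => by rw [norm_mul, hz0, mul_one])
          have e : ∑' n : ℤ, A n * z ^ n = ∑' n : ℤ, (A n - b n) * z ^ n := by
            simp only [sub_mul]
            rw [s1.tsum_sub s2, hz z hzs hz1, sub_zero]
          rw [h3, e]
          exact tsum_of_norm_bounded hDs.hasSum fun n => by rw [norm_mul, hz0, mul_one]
        rw [h2]
        rw [norm_sub_rev] at h1
        have := norm_sub_norm_le (∑ m ∈ Finset.range N, a m • z ^ m) (∑' m : ℕ, a m • z ^ m)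
        linarith
      · intro n
        have h1 := tailLem T hTk a ha N
        have h2 : Polynomial.aeval T q = ∑ m ∈ Finset.range N, a m • T ^ m := by
          simp [q, Polynomial.aeval_monomial, Algebra.smul_def]
        rw [← h2, ← hS] at h1
        have h3 : u n ≤ ‖T ^ n * Polynomial.aeval T q‖ + ‖S - Polynomial.aeval T q‖ := by
          have e : T ^ n * S = T ^ n * Polynomial.aeval T q + T ^ n * (S - Polynomial.aeval T q) := by
            rw [mul_sub]; abel
          simp only [hu]
          rw [e]
          refine (norm_add_le _ _).trans (add_le_add le_rfl ?_)
          exact (norm_mul_le _ _).trans (mul_le_of_le_one_left (norm_nonneg _) (hTk n))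
        have := hcu n
        linarith
    have hlim : Tendsto (fun N : ℕ => (∑' n : ℤ, ‖A n - b n‖) + 2 * ∑' k, ‖a (k + N)‖) atTop
        (𝓝 ((∑' n : ℤ, ‖A n - b n‖) + 2 * 0)) :=
      ((tendsto_sum_nat_add fun n => ‖a n‖).const_mul 2).const_add _
    rw [mul_zero, add_zero] at hlim
    exact ge_of_tendsto' hlim key
  · push Not at hex
    have hb0 := fourierUniq b hb fun z h => hz z (hex z h) h
    have h1 := tailLem T hTk a ha 0
    have h2 : ∑' n : ℤ, ‖A n - b n‖ = ∑' k, ‖a k‖ := by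
      rw [← Function.Injective.tsum_eq (Nat.cast_injective (R := ℤ))]
      · simp [hAcast, hb0]
      · intro n hn
        by_contra h
        exact hn (by simp [hAoff n h, hb0])
    rw [h2]
    have := hcu 0
    simp [hu] at this
    simp [← hS] at h1
    linarith
end
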